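/- arXiv:2201.07764 — 5 statements merged into one kernel-verified Lean document; each statement's English description precedes it below -/
import Mathlib

section
/- Let φ: ℝ² → ℝ be C² and harmonic (∂_x²φ + ∂_z²φ = 0 on ℝ²), and let η: ℝ → ℝ be C². Define Φ(x) = φ(x, η(x)) and G(x) = ∂_zφ(x, η(x)) − ∂_xφ(x, η(x))·η′(x). Then for every x, writing p = η′(x), q = η″(x), E = 1 + p², and evaluating all partial derivatives of φ at the point (x, η(x)): ∂_x²φ = [(1 − p²)Φ″(x) − 2p·G′(x)]/E² + q·[(p³ − 3p)Φ′(x) + (3p² − 1)G(x)]/E³; ∂_z²φ = [(p² − 1)Φ″(x) + 2p·G′(x)]/E² + q·[(3p − p³)Φ′(x) + (1 − 3p²)G(x)]/E³; ∂_x∂_zφ = [2p·Φ″(x) + (1 − p²)G′(x)]/E² + q·[(1 − 3p²)Φ′(x) + (p³ − 3p)G(x)]/E³. -/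
/-! Differentiating along the surface `t ↦ (t, η t)` with the chain rule gives, with `u = ∂ₓφ`,
`v = ∂_zφ`, `a = ∂ₓ²φ`, `b = ∂_z²φ`, `c = ∂ₓ∂_zφ` at the surface point,

* `Φ' = u + p v` and `G = v - p u`, hence `E u = Φ' - p G` and `E v = p Φ' + G`;
* `Φ'' = a + 2 p c + p² b + q v` and `G' = c + p b - p (a + p c) - q u`, where the symmetry of the
  second derivative has been used.

Harmonicity replaces `b` by `-a`. The last two equations are then a linear system for `(a, c)` with
matrix `[[1 - p², 2p], [-2p, 1 - p²]]` and determinant `(1 - p²)² + 4p² = E² > 0`; solving it gives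
the stated formulas.
-/

/-- The chain rule along a graph: a function `f` on the plane restricted to `t ↦ (t, η t)`. -/
lemma hasDerivAt_comp_graph {f : ℝ × ℝ → ℝ} {η : ℝ → ℝ} (hf : Differentiable ℝ f)
    (hη : Differentiable ℝ η) (x : ℝ) :
    HasDerivAt (fun t => f (t, η t))
      (fderiv ℝ f (x, η x) (1, 0) + deriv η x * fderiv ℝ f (x, η x) (0, 1)) x := by
  have h := (hf (x, η x)).hasFDerivAt.comp_hasDerivAt x
    ((hasDerivAt_id x).prodMk (hη x).hasDerivAt)
  have e : ((1 : ℝ), deriv η x) = (1, 0) + deriv η x • ((0 : ℝ), (1 : ℝ)) := by simp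
  rw [e, map_add, map_smul, smul_eq_mul] at h
  exact h

/-- second-order partial derivatives of a harmonic potential at the
surface, expressed through the surface trace `Φ` and the Dirichlet–Neumann trace `G`. -/
theorem stmt_1 (φ : ℝ × ℝ → ℝ) (η : ℝ → ℝ)
    (hφ : ContDiff ℝ 2 φ) (hη : ContDiff ℝ 2 η)
    (φx φz : ℝ × ℝ → ℝ)
    (hφx : ∀ p, φx p = fderiv ℝ φ p (1, 0))
    (hφz : ∀ p, φz p = fderiv ℝ φ p (0, 1))
    (harm : ∀ p, fderiv ℝ φx p (1, 0) + fderiv ℝ φz p (0, 1) = 0)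
    (Φ G : ℝ → ℝ)
    (hΦ : ∀ x, Φ x = φ (x, η x))
    (hG : ∀ x, G x = φz (x, η x) - φx (x, η x) * deriv η x)
    (x p q E : ℝ)
    (hp : p = deriv η x) (hq : q = deriv (deriv η) x) (hE : E = 1 + p ^ 2) :
    fderiv ℝ φx (x, η x) (1, 0)
      = ((1 - p ^ 2) * deriv (deriv Φ) x - 2 * p * deriv G x) / E ^ 2
        + q * ((p ^ 3 - 3 * p) * deriv Φ x + (3 * p ^ 2 - 1) * G x) / E ^ 3 ∧
    fderiv ℝ φz (x, η x) (0, 1)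
      = ((p ^ 2 - 1) * deriv (deriv Φ) x + 2 * p * deriv G x) / E ^ 2
        + q * ((3 * p - p ^ 3) * deriv Φ x + (1 - 3 * p ^ 2) * G x) / E ^ 3 ∧
    fderiv ℝ φz (x, η x) (1, 0)
      = (2 * p * deriv (deriv Φ) x + (1 - p ^ 2) * deriv G x) / E ^ 2
        + q * ((1 - 3 * p ^ 2) * deriv Φ x + (p ^ 3 - 3 * p) * G x) / E ^ 3 := by
  obtain rfl : φx = fun y => fderiv ℝ φ y (1, 0) := funext hφx
  obtain rfl : φz = fun y => fderiv ℝ φ y (0, 1) := funext hφz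
  have dφ : Differentiable ℝ φ := hφ.differentiable (by norm_num)
  have dη : Differentiable ℝ η := hη.differentiable (by norm_num)
  have dD : Differentiable ℝ (fderiv ℝ φ) :=
    (hφ.fderiv_right (m := 1) (by norm_num)).differentiable (by norm_num)
  have dη' : Differentiable ℝ (deriv η) :=
    (contDiff_succ_iff_deriv.1 (show ContDiff ℝ (1 + 1) η from by
      rw [one_add_one_eq_two]; exact hη)).2.2.differentiable (by norm_num)
  have dx : Differentiable ℝ (fun y => fderiv ℝ φ y (1, 0)) :=
    fun y => (dD y).clm_apply (differentiableAt_const _)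
  have dz : Differentiable ℝ (fun y => fderiv ℝ φ y (0, 1)) :=
    fun y => (dD y).clm_apply (differentiableAt_const _)
  have second : ∀ v w y, fderiv ℝ (fun y => fderiv ℝ φ y v) y w
      = fderiv ℝ (fderiv ℝ φ) y w v := by
    intro v w y
    rw [fderiv_clm_apply (dD y) (differentiableAt_const _)]
    simp
  have mixed : fderiv ℝ (fun y => fderiv ℝ φ y (1, 0)) (x, η x) (0, 1)
      = fderiv ℝ (fun y => fderiv ℝ φ y (0, 1)) (x, η x) (1, 0) := by
    rw [second, second]
    exact (hφ.contDiffAt.isSymmSndFDerivAt (by simp)) (0, 1) (1, 0)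
  have hΦ' : deriv Φ = fun t => fderiv ℝ φ (t, η t) (1, 0)
      + deriv η t * fderiv ℝ φ (t, η t) (0, 1) := by
    obtain rfl : Φ = fun t => φ (t, η t) := funext hΦ
    exact funext fun t => (hasDerivAt_comp_graph dφ dη t).deriv
  have cx := hasDerivAt_comp_graph dx dη x
  have cz := hasDerivAt_comp_graph dz dη x
  have hη'' := (dη' x).hasDerivAt
  have hΦ'' := (cx.add (hη''.mul cz)).deriv
  have hG' := (cz.sub (cx.mul hη'')).deriv
  have eΦ : deriv (deriv Φ) x = _ := (congrArg (fun f => deriv f x) hΦ').trans hΦ''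
  have eG : deriv G x = _ := (congrArg (fun f => deriv f x) (funext hG)).trans hG'
  have hE0 : E ≠ 0 := by rw [hE]; positivity
  have hm := harm (x, η x)
  rw [eΦ, eG, congrFun hΦ' x, hG x, mixed, eq_neg_of_add_eq_zero_right hm, ← hp, ← hq]
  generalize fderiv ℝ (fun y => fderiv ℝ φ y (1, 0)) (x, η x) (1, 0) = a
  generalize fderiv ℝ (fun y => fderiv ℝ φ y (0, 1)) (x, η x) (1, 0) = c
  beta_reduce
  generalize fderiv ℝ φ (x, η x) (1, 0) = u
  generalize fderiv ℝ φ (x, η x) (0, 1) = v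
  -- what remains are identities of rational functions in `a`, `c`, `u`, `v`, `p`, `q`
  refine ⟨?_, ?_, ?_⟩ <;> field_simp <;> rw [hE] <;> ring
end

section
/- Let φ: ℝ² → ℝ be C³ and harmonic (∂_x²φ + ∂_z²φ = 0 on ℝ²), and let η: ℝ → ℝ be C³. Define Φ(x) = φ(x, η(x)) and G(x) = ∂_zφ(x, η(x)) − ∂_xφ(x, η(x))·η′(x). Fix x and write p = η′(x), q = η″(x), s = η‴(x), E = 1 + p². Let P = 3q·Φ″(x) + s·Φ′(x) and Q = 3q·G′(x) + s·G(x). Then, evaluating all partial derivatives of φ at (x, η(x)): ∂_x³φ = [(1 − 3p²)Φ‴(x) + (p³ − 3p)G″(x)]/E³ + [(4p³ − 4p)P + (6p² − p⁴ − 1)Q]/E⁴ + 3q²[(10p² − 5p⁴ − 1)Φ′(x) + (p⁵ − 10p³ + 5p)G(x)]/E⁵; ∂_x²∂_zφ = [(3p − p³)Φ‴(x) + (1 − 3p²)G″(x)]/E³ + [(p⁴ + 1 − 6p²)P + (4p³ − 4p)Q]/E⁴ + 3q²[(10p³ − p⁵ − 5p)Φ′(x) + (10p² − 5p⁴ − 1)G(x)]/E⁵;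 ∂_x∂_z²φ = [(3p² − 1)Φ‴(x) + (3p − p³)G″(x)]/E³ + [(4p − 4p³)P + (p⁴ + 1 − 6p²)Q]/E⁴ + 3q²[(5p⁴ + 1 − 10p²)Φ′(x) + (10p³ − p⁵ − 5p)G(x)]/E⁵; ∂_z³φ = [(p³ − 3p)Φ‴(x) + (3p² − 1)G″(x)]/E³ + [(6p² − p⁴ − 1)P + (4p − 4p³)Q]/E⁴ + 3q²[(p⁵ − 10p³ + 5p)Φ′(x) + (5p⁴ + 1 − 10p²)G(x)]/E⁵. -/
/-!
Because `φ` is harmonic, its complex gradient `w = φx - i φz` is holomorphic, and along the curve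
`ζ(t) = t + i η(t)` the traces satisfy `Φ' - i G = (w ∘ ζ) ζ'`.  Differentiating this twice gives a
triangular linear system for `w, w', w''` on the curve, whose solution is
`w'' = W'' / ζ'^3 - (3 ζ'' W' + ζ''' W) / ζ'^4 + 3 ζ''^2 W / ζ'^5` with `W = Φ' - i G`.
Its real and imaginary parts are `φxxx` and `-φxxz`; harmonicity yields the other two derivatives.

The proof carries this out in real form: the chain rule along the graph (`hasDerivAt_trace`) and the
symmetry of second derivatives (`partial_comm`) express `Φ', Φ'', Φ''', G, G', G''` through the
partial derivatives of `φ` up to order three, and the identities then hold as rational identities,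
where the only denominator `1 + p ^ 2` is positive.
-/

/-- Chain rule along the graph of `η`. -/
lemma hasDerivAt_trace {f : ℝ × ℝ → ℝ} {η : ℝ → ℝ} (hf : Differentiable ℝ f)
    (hη : Differentiable ℝ η) (t : ℝ) :
    HasDerivAt (fun t => f (t, η t))
      (fderiv ℝ f (t, η t) (1, 0) + fderiv ℝ f (t, η t) (0, 1) * deriv η t) t := by
  have h1 : HasDerivAt (fun t => (t, η t)) ((1 : ℝ), deriv η t) t :=
    (hasDerivAt_id t).prodMk (hη t).hasDerivAt
  have h2 := (hf (t, η t)).hasFDerivAt.comp_hasDerivAt t h1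
  have h3 : ((1 : ℝ), deriv η t) = (1, 0) + deriv η t • ((0 : ℝ), (1 : ℝ)) := by simp
  rw [h3, map_add, map_smul, smul_eq_mul, mul_comm] at h2
  exact h2

lemma contDiff_partial {f g : ℝ × ℝ → ℝ} {v : ℝ × ℝ} {m n : ℕ} (hf : ContDiff ℝ n f)
    (hmn : m + 1 ≤ n) (hg : ∀ y, g y = fderiv ℝ f y v) : ContDiff ℝ m g := by
  rw [funext hg]
  exact (hf.fderiv_right (by exact_mod_cast hmn)).clm_apply contDiff_const

/-- Symmetry of second derivatives for named partial derivatives of a `C²` function. -/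
lemma partial_comm {f g h : ℝ × ℝ → ℝ} {v w : ℝ × ℝ} (hf : ContDiff ℝ 2 f)
    (hg : ∀ y, g y = fderiv ℝ f y v) (hh : ∀ y, h y = fderiv ℝ f y w) (y : ℝ × ℝ) :
    fderiv ℝ g y w = fderiv ℝ h y v := by
  have hd : DifferentiableAt ℝ (fderiv ℝ f) y :=
    (hf.fderiv_right (m := 1) (by norm_num)).differentiable (by norm_num) y
  have key : ∀ u u' : ℝ × ℝ,
      fderiv ℝ (fun z => fderiv ℝ f z u) y u' = fderiv ℝ (fderiv ℝ f) y u' u := by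
    intro u u'
    rw [fderiv_clm_apply hd (differentiableAt_const u)]
    simp
  rw [funext hg, funext hh, key, key]
  exact (hf.contDiffAt.isSymmSndFDerivAt (by simp)) w v

/-- third-order partial derivatives of a harmonic potential at the
surface, expressed through the surface trace `Φ` and the Dirichlet–Neumann trace `G`. -/
theorem stmt_2 (φ : ℝ × ℝ → ℝ) (η : ℝ → ℝ)
    (hφ : ContDiff ℝ 3 φ) (hη : ContDiff ℝ 3 η)
    (φx φz φxx φxz φzz : ℝ × ℝ → ℝ)
    (hφx : ∀ p, φx p = fderiv ℝ φ p (1, 0))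
    (hφz : ∀ p, φz p = fderiv ℝ φ p (0, 1))
    (hφxx : ∀ p, φxx p = fderiv ℝ φx p (1, 0))
    (hφxz : ∀ p, φxz p = fderiv ℝ φz p (1, 0))
    (hφzz : ∀ p, φzz p = fderiv ℝ φz p (0, 1))
    (harm : ∀ p, φxx p + φzz p = 0)
    (Φ G : ℝ → ℝ)
    (hΦ : ∀ x, Φ x = φ (x, η x))
    (hG : ∀ x, G x = φz (x, η x) - φx (x, η x) * deriv η x)
    (x p q s E P Q : ℝ)
    (hp : p = deriv η x) (hq : q = deriv (deriv η) x)
    (hs : s = deriv (deriv (deriv η)) x) (hE : E = 1 + p ^ 2)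
    (hP : P = 3 * q * deriv (deriv Φ) x + s * deriv Φ x)
    (hQ : Q = 3 * q * deriv G x + s * G x) :
    fderiv ℝ φxx (x, η x) (1, 0)
      = ((1 - 3 * p ^ 2) * deriv (deriv (deriv Φ)) x
          + (p ^ 3 - 3 * p) * deriv (deriv G) x) / E ^ 3
        + ((4 * p ^ 3 - 4 * p) * P + (6 * p ^ 2 - p ^ 4 - 1) * Q) / E ^ 4
        + 3 * q ^ 2 * ((10 * p ^ 2 - 5 * p ^ 4 - 1) * deriv Φ x
            + (p ^ 5 - 10 * p ^ 3 + 5 * p) * G x) / E ^ 5 ∧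
    fderiv ℝ φxz (x, η x) (1, 0)
      = ((3 * p - p ^ 3) * deriv (deriv (deriv Φ)) x
          + (1 - 3 * p ^ 2) * deriv (deriv G) x) / E ^ 3
        + ((p ^ 4 + 1 - 6 * p ^ 2) * P + (4 * p ^ 3 - 4 * p) * Q) / E ^ 4
        + 3 * q ^ 2 * ((10 * p ^ 3 - p ^ 5 - 5 * p) * deriv Φ x
            + (10 * p ^ 2 - 5 * p ^ 4 - 1) * G x) / E ^ 5 ∧
    fderiv ℝ φzz (x, η x) (1, 0)
      = ((3 * p ^ 2 - 1) * deriv (deriv (deriv Φ)) x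
          + (3 * p - p ^ 3) * deriv (deriv G) x) / E ^ 3
        + ((4 * p - 4 * p ^ 3) * P + (p ^ 4 + 1 - 6 * p ^ 2) * Q) / E ^ 4
        + 3 * q ^ 2 * ((5 * p ^ 4 + 1 - 10 * p ^ 2) * deriv Φ x
            + (10 * p ^ 3 - p ^ 5 - 5 * p) * G x) / E ^ 5 ∧
    fderiv ℝ φzz (x, η x) (0, 1)
      = ((p ^ 3 - 3 * p) * deriv (deriv (deriv Φ)) x
          + (3 * p ^ 2 - 1) * deriv (deriv G) x) / E ^ 3
        + ((6 * p ^ 2 - p ^ 4 - 1) * P + (4 * p - 4 * p ^ 3) * Q) / E ^ 4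
        + 3 * q ^ 2 * ((p ^ 5 - 10 * p ^ 3 + 5 * p) * deriv Φ x
            + (5 * p ^ 4 + 1 - 10 * p ^ 2) * G x) / E ^ 5 := by
  have cx : ContDiff ℝ (2 : ℕ) φx := contDiff_partial (n := 3) hφ (by norm_num) hφx
  have cz : ContDiff ℝ (2 : ℕ) φz := contDiff_partial (n := 3) hφ (by norm_num) hφz
  have cxx : ContDiff ℝ (1 : ℕ) φxx := contDiff_partial cx (by norm_num) hφxx
  have cxz : ContDiff ℝ (1 : ℕ) φxz := contDiff_partial cz (by norm_num) hφxz
  have dφ : Differentiable ℝ φ := hφ.differentiable (by norm_num)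
  have dx : Differentiable ℝ φx := cx.differentiable (by norm_num)
  have dz : Differentiable ℝ φz := cz.differentiable (by norm_num)
  have dxx : Differentiable ℝ φxx := cxx.differentiable (by norm_num)
  have dxz : Differentiable ℝ φxz := cxz.differentiable (by norm_num)
  have c1 : ContDiff ℝ 2 (deriv η) := ContDiff.deriv' (n := 2) hη
  have c2 : ContDiff ℝ 1 (deriv (deriv η)) := ContDiff.deriv' (n := 1) c1
  have dη : Differentiable ℝ η := hη.differentiable (by norm_num)
  have h1 : ∀ t, HasDerivAt (deriv η) (deriv (deriv η) t) t := fun t =>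
    (c1.differentiable (by norm_num) t).hasDerivAt
  have h2 : ∀ t, HasDerivAt (deriv (deriv η)) (deriv (deriv (deriv η)) t) t := fun t =>
    (c2.differentiable (by norm_num) t).hasDerivAt
  have ezz : φzz = fun y => -φxx y := funext fun y => by linarith [harm y]
  have exz : ∀ y, fderiv ℝ φx y (0, 1) = φxz y := fun y => by
    rw [hφxz, partial_comm (hφ.of_le (by norm_num)) hφx hφz]
  have dzz : ∀ y v, fderiv ℝ φzz y v = -fderiv ℝ φxx y v := fun y v => by
    rw [ezz, fderiv_fun_neg]; rfl
  -- `∂z φxx = ∂x φxz` and `∂z φxz = ∂x φzz = -∂x φxx`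
  have exxz : ∀ y, fderiv ℝ φxx y (0, 1) = fderiv ℝ φxz y (1, 0) := fun y =>
    partial_comm cx hφxx (fun y => (exz y).symm) y
  have exzz : ∀ y, fderiv ℝ φxz y (0, 1) = -fderiv ℝ φxx y (1, 0) := fun y => by
    rw [partial_comm cz hφxz hφzz, dzz]
  have tx : ∀ t, HasDerivAt (fun t => φx (t, η t))
      (φxx (t, η t) + φxz (t, η t) * deriv η t) t := fun t => by
    have := hasDerivAt_trace dx dη t
    rwa [← hφxx, exz] at this
  have tz : ∀ t, HasDerivAt (fun t => φz (t, η t))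
      (φxz (t, η t) - φxx (t, η t) * deriv η t) t := fun t => by
    have := hasDerivAt_trace dz dη t
    rwa [← hφxz, ← hφzz, ezz, neg_mul, ← sub_eq_add_neg] at this
  have txx : ∀ t, HasDerivAt (fun t => φxx (t, η t))
      (fderiv ℝ φxx (t, η t) (1, 0) + fderiv ℝ φxz (t, η t) (1, 0) * deriv η t) t := fun t => by
    have := hasDerivAt_trace dxx dη t
    rwa [exxz] at this
  have txz : ∀ t, HasDerivAt (fun t => φxz (t, η t))
      (fderiv ℝ φxz (t, η t) (1, 0) - fderiv ℝ φxx (t, η t) (1, 0) * deriv η t) t := fun t => by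
    have := hasDerivAt_trace dxz dη t
    rwa [exzz, neg_mul, ← sub_eq_add_neg] at this
  have eΦ1 : deriv Φ = fun t => φx (t, η t) + φz (t, η t) * deriv η t := by
    funext t
    rw [funext hΦ, (hasDerivAt_trace dφ dη t).deriv, hφx, hφz]
  have eΦ2 : deriv (deriv Φ) = fun t => (φxx (t, η t) + φxz (t, η t) * deriv η t)
      + ((φxz (t, η t) - φxx (t, η t) * deriv η t) * deriv η t
        + φz (t, η t) * deriv (deriv η) t) := by
    funext t
    rw [eΦ1]
    exact ((tx t).add ((tz t).mul (h1 t))).deriv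
  have eG1 : deriv G = fun t => (φxz (t, η t) - φxx (t, η t) * deriv η t)
      - ((φxx (t, η t) + φxz (t, η t) * deriv η t) * deriv η t
        + φx (t, η t) * deriv (deriv η) t) := by
    funext t
    rw [funext hG]
    exact ((tz t).sub ((tx t).mul (h1 t))).deriv
  have eΦ3 := (((txx x).add ((txz x).mul (h1 x))).add
    ((((txz x).sub ((txx x).mul (h1 x))).mul (h1 x)).add ((tz x).mul (h2 x)))).deriv
  have eG2 := (((txz x).sub ((txx x).mul (h1 x))).sub
    ((((txx x).add ((txz x).mul (h1 x))).mul (h1 x)).add ((tx x).mul (h2 x)))).deriv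
  replace eΦ3 := (congrArg (fun f => deriv f x) eΦ2).trans eΦ3
  replace eG2 := (congrArg (fun f => deriv f x) eG1).trans eG2
  have vΦ1 := congrFun eΦ1 x
  have vΦ2 := congrFun eΦ2 x
  have vG1 := congrFun eG1 x
  have vG := hG x
  simp only [Pi.add_apply, Pi.sub_apply, Pi.mul_apply, ← hp, ← hq, ← hs]
    at eΦ3 eG2 vΦ1 vΦ2 vG1 vG
  have hE0 : (1 + p ^ 2) ≠ 0 := by positivity
  rw [dzz, dzz, exxz, hP, hQ, hE, eΦ3, eG2, vΦ1, vΦ2, vG1, vG]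
  clear * - hE0
  generalize fderiv ℝ φxx (x, η x) (1, 0) = A
  generalize fderiv ℝ φxz (x, η x) (1, 0) = B
  generalize φxx (x, η x) = a
  generalize φxz (x, η x) = b
  generalize φx (x, η x) = u
  generalize φz (x, η x) = v
  refine ⟨?_, ?_, ?_, ?_⟩ <;> field_simp <;> ring
end

section
/- Let b > 0 and h > 0, and let r: ℝ → ℝ be smooth with compact support. Then ∫_ℝ r(x)·[ ∂_x( r(x) + (3/(4h))·r(x)² ) − b·∂_x³( r(x) + (3/(4h))·r(x)² ) ] dx = (3b/(4h)) · ∫_ℝ (r′(x))³ dx. (In particular the H¹-type functional ∫ r·(1 − b∂_x²)r dx is not conserved by the stochastic BBM equation, since under the stochastic BBM dynamics its differential equals (3b/(2h)) Σ_j γ_j ∫ (∂_x r)³ dx ∘ dW_j, which is not zero in general.) -/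
open MeasureTheory

/-! The integrand minus `(3b/(4h)) (r')³` is an exact derivative: with `c = 3/(4h)` it is the
derivative of
`r²/2 + (2c/3) r³ - b (r r'' - (r')²/2) - 2bc (r² r'' + r (r')²/2)`,
which is smooth and compactly supported, so its derivative has integral zero. -/

/-- the integration-by-parts identity showing that the `H¹`-type
functional of BBM is not conserved by the stochastic BBM noise. -/
theorem stmt_7 (b h : ℝ) (hb : 0 < b) (hh : 0 < h) (r : ℝ → ℝ)
    (hr : ContDiff ℝ (⊤ : ℕ∞) r) (hsupp : HasCompactSupport r) :
    ∫ x : ℝ, r x *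
        (deriv (fun y => r y + 3 / (4 * h) * r y ^ 2) x
          - b * deriv (deriv (deriv (fun y => r y + 3 / (4 * h) * r y ^ 2))) x)
      = 3 * b / (4 * h) * ∫ x : ℝ, (deriv r x) ^ 3 := by
  have hk : 3 * b / (4 * h) = b * (3 / (4 * h)) := by ring
  rw [hk]
  generalize 3 / (4 * h) = c
  have hp : ContDiff ℝ (⊤ : ℕ∞) (deriv r) := (contDiff_infty_iff_deriv.1 hr).2
  have hq : ContDiff ℝ (⊤ : ℕ∞) (deriv (deriv r)) := (contDiff_infty_iff_deriv.1 hp).2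
  have hs : ContDiff ℝ (⊤ : ℕ∞) (deriv (deriv (deriv r))) := (contDiff_infty_iff_deriv.1 hq).2
  have dr (x) : HasDerivAt r (deriv r x) x := (hr.differentiable (by simp) x).hasDerivAt
  have dp (x) : HasDerivAt (deriv r) (deriv (deriv r) x) x :=
    (hp.differentiable (by simp) x).hasDerivAt
  have dq (x) : HasDerivAt (deriv (deriv r)) (deriv (deriv (deriv r)) x) x :=
    (hq.differentiable (by simp) x).hasDerivAt
  have cp : HasCompactSupport (deriv r) := hsupp.deriv
  generalize deriv (deriv (deriv r)) = s at *
  generalize deriv (deriv r) = q at *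
  generalize deriv r = p at *
  have e1 : deriv (fun y => r y + c * r y ^ 2) = fun x => p x + 2 * c * (r x * p x) := by
    ext x
    refine ((dr x).add (((dr x).pow 2).const_mul c)).deriv.trans ?_
    push_cast; ring
  have e2 : deriv (fun x => p x + 2 * c * (r x * p x))
      = fun x => q x + 2 * c * (p x * p x + r x * q x) := by
    ext x
    exact ((dp x).add (((dr x).mul (dp x)).const_mul (2 * c))).deriv
  have e3 : deriv (fun x => q x + 2 * c * (p x * p x + r x * q x))
      = fun x => s x + 2 * c * (3 * p x * q x + r x * s x) := by
    ext x
    refine ((dq x).add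
      ((((dp x).mul (dp x)).add ((dr x).mul (dq x))).const_mul (2 * c))).deriv.trans ?_
    ring
  rw [e1, e2, e3]
  have hrc := hr.continuous
  have hpc := hp.continuous
  have hqc := hq.continuous
  have hsc := hs.continuous
  -- Every term below contains a factor `r` or `p`, both compactly supported.
  have key (u v : ℝ → ℝ) (hu : Continuous u) (hv : Continuous v) :
      Integrable (fun x => r x * u x + p x * v x) :=
    ((hrc.mul hu).integrable_of_hasCompactSupport hsupp.mul_right).add
      ((hpc.mul hv).integrable_of_hasCompactSupport cp.mul_right)
  have i1 : Integrable (fun x => r x * (p x + 2 * c * (r x * p x)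
      - b * (s x + 2 * c * (3 * p x * q x + r x * s x)))) := by
    convert key (fun x => p x + 2 * c * (r x * p x)
      - b * (s x + 2 * c * (3 * p x * q x + r x * s x))) (fun _ => 0)
      (by fun_prop) (by fun_prop) using 2
    ring
  have i2 : Integrable (fun x => b * c * p x ^ 3) := by
    convert key (fun _ => 0) (fun x => b * c * p x ^ 2) (by fun_prop) (by fun_prop) using 2
    ring
  have i3 : Integrable (fun x => r x ^ 2 / 2 + 2 * c / 3 * r x ^ 3
      - b * (r x * q x - p x ^ 2 / 2)
      - 2 * b * c * (r x ^ 2 * q x + r x * p x ^ 2 / 2)) := by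
    convert key (fun x => r x / 2 + 2 * c / 3 * r x ^ 2 - b * q x
      - 2 * b * c * (r x * q x + p x ^ 2 / 2)) (fun x => b * p x / 2)
      (by fun_prop) (by fun_prop) using 2
    ring
  have hG := integral_eq_zero_of_hasDerivAt_of_integrable (fun x => by
    have d1 := ((dr x).pow 2).div_const 2
    have d2 := ((dr x).pow 3).const_mul (2 * c / 3)
    have d3 := (((dr x).mul (dq x)).sub (((dp x).pow 2).div_const 2)).const_mul b
    have d4 := ((((dr x).pow 2).mul (dq x)).add
      (((dr x).mul ((dp x).pow 2)).div_const 2)).const_mul (2 * b * c)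
    refine (((d1.add d2).sub d3).sub d4).congr_deriv (g' := r x * (p x + 2 * c * (r x * p x)
      - b * (s x + 2 * c * (3 * p x * q x + r x * s x))) - b * c * p x ^ 3) ?_
    simp only [Pi.pow_apply]
    push_cast; ring) (i1.sub i2) i3
  rw [integral_sub' i1 i2, integral_const_mul] at hG
  exact sub_eq_zero.1 hG
end

section
/- Let g, h > 0. Let P denote the Fourier multiplier with even symbol tanh(hξ)/(hξ) (value 1 at ξ = 0) — i.e. P = K² — and let N = K⁻¹ be the multiplier with symbol √(hξ/tanh(hξ)). Let η, v: ℝ × ℝ → ℝ be smooth functions of (t, x) such that: (a) for every t, the sections x ↦ η(t, x) and x ↦ v(t, x) are Schwartz; (b) for every compact interval I ⊂ ℝ and all nonnegative integers k, n, sup_{t ∈ I, x ∈ ℝ} (1 + |x|)^k ( |∂_x^n η(t,x)| + |∂_x^n v(t,x)| + |∂_t∂_x^n η(t,x)| + |∂_t∂_x^n v(t,x)| ) < ∞; and (c) η and v satisfy the deterministic Whitham–Boussinesq system ∂_tη = −h·∂_xv − P∂_x(ηv) and ∂_tv = −g·P∂_xη − P∂_x(v²/2) for all (t, x). Then the energy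 t ↦ ℋ(t) = (1/2)∫_ℝ ( g·η(t,x)² + h·(N v(t, ·))(x)² + η(t,x)·v(t,x)² ) dx is constant in t. -/
/-!
The energy is differentiated under the integral sign and its derivative is shown to vanish.

By Plancherel the nonlocal part `∫ (Nv)²` of the energy equals `∫ N²|𝓕v|²`, whose time derivative
is `2 ∫ N² Re(conj(𝓕v) 𝓕vₜ)`. With the variational derivatives `u = gη + v²/2` and `p = ηv` the
system reads `ηₜ = -h vₓ - P∂ₓp`, `vₜ = -P∂ₓu`. Since `N²P = 1`, the second equation gives
`N²vₜ = -uₓ`, so the nonlocal part contributes `-h ∫ v uₓ` to the derivative of the energy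
(`SymbolPair.integral_inner`). The remaining part contributes
`∫ (u ηₜ + p vₜ) = -h ∫ u vₓ - ∫ (u P∂ₓp + p P∂ₓu)`, and the last integral vanishes because `P∂ₓ` is
skew-adjoint (`SymbolPair.skew`). The sum is `-h ∫ (uv)ₓ = 0` (`SymbolPair.energy_balance`).

Differentiation under the integral is justified by dominating everything by multiples of the weight
`(1+|x|)⁻²`. On the Fourier side `N²` grows linearly, and the decay `(1+|y|)⁻³` of `𝓕v` needed to
absorb this comes from the bounds on `v` and `∂ₓ³v` (`ftR_decay`). Plancherel is needed for `Nv`,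
which is only given as an absolutely convergent inverse Fourier integral of a function which need
not be Schwartz; it is deduced from the `L²` theory in `plancherel_L1_L2`.
-/

open MeasureTheory

/-- The Fourier transform `𝓕f(ξ) = ∫ e^{−iξx} f(x) dx` of a real function. -/
noncomputable def fourierInt (f : ℝ → ℝ) (ξ : ℝ) : ℂ :=
  ∫ x : ℝ, Complex.exp (-(Complex.I * ξ * x)) * (f x : ℂ)

/-- The Fourier multiplier `m(D)` with symbol `m` acting on a real function. -/
noncomputable def fourierMult (m : ℝ → ℝ) (f : ℝ → ℝ) (x : ℝ) : ℂ :=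
  (1 / (2 * Real.pi) : ℂ) *
    ∫ ξ : ℝ, (m ξ : ℂ) * fourierInt f ξ * Complex.exp (Complex.I * ξ * x)

open scoped FourierTransform SchwartzMap ContDiff ENNReal

/-! ### Fourier transforms and multipliers of real functions -/

/-- The Fourier transform of a real function in the normalisation `e^{-2πixy}`, for which
Plancherel's identity carries no constant. -/
noncomputable def ftR (f : ℝ → ℝ) : ℝ → ℂ := 𝓕 (fun x => (f x : ℂ))

lemma fourierInt_eq (f : ℝ → ℝ) (y : ℝ) : fourierInt f (2 * Real.pi * y) = ftR f y := by
  unfold fourierInt ftR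
  rw [Real.fourier_real_eq_integral_exp_smul]
  congr 1 with x
  rw [smul_eq_mul]
  congr 2
  push_cast
  ring

/-- The multiplier `m(D)` after the substitution `ξ = 2πy`. -/
lemma fourierMult_eq (m f : ℝ → ℝ) (x : ℝ) :
    fourierMult m f x = 𝓕⁻ (fun y : ℝ => (m (2 * Real.pi * y) : ℂ) * ftR f y) x := by
  unfold fourierMult
  rw [Real.fourierInv_eq']
  have h := Measure.integral_comp_mul_left
    (fun ξ : ℝ => (m ξ : ℂ) * fourierInt f ξ * Complex.exp (Complex.I * ξ * x)) (2 * Real.pi)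
  rw [abs_of_pos (by positivity)] at h
  have h2 : (1 / (2 * Real.pi) : ℂ) * ∫ ξ : ℝ, (m ξ : ℂ) * fourierInt f ξ *
      Complex.exp (Complex.I * ξ * x) = (2 * Real.pi)⁻¹ • ∫ ξ : ℝ, (m ξ : ℂ) * fourierInt f ξ *
      Complex.exp (Complex.I * ξ * x) := by
    rw [Complex.real_smul]; push_cast; simp
  rw [h2, ← h]
  congr 1 with y
  rw [fourierInt_eq, smul_eq_mul, mul_comm]
  congr 2
  simp
  ring

lemma ftR_neg (f : ℝ → ℝ) (y : ℝ) : ftR f (-y) = (starRingEnd ℂ) (ftR f y) := by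
  unfold ftR
  rw [Real.fourier_real_eq_integral_exp_smul, Real.fourier_real_eq_integral_exp_smul,
    ← integral_conj]
  congr 1 with x
  simp [← Complex.exp_conj, Complex.conj_ofNat]

/-- An even symbol maps real functions to real functions. -/
lemma fourierMult_conj (m f : ℝ → ℝ) (hm : ∀ x, m (-x) = m x) (x : ℝ) :
    (starRingEnd ℂ) (fourierMult m f x) = fourierMult m f x := by
  rw [fourierMult_eq, Real.fourierInv_eq', ← integral_conj]
  rw [← integral_neg_eq_self]
  congr 1 with y
  have : (m (2 * Real.pi * -y)) = m (2 * Real.pi * y) := by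
    rw [← hm]; congr 1; ring
  rw [this]
  simp [← Complex.exp_conj, ftR_neg, Complex.conj_ofNat]

lemma ftR_continuous {f : ℝ → ℝ} (hf : Integrable f) : Continuous (ftR f) :=
  VectorFourier.fourierIntegral_continuous Real.continuous_fourierChar
    (by exact continuous_inner) hf.ofReal

lemma norm_ftR_le (f : ℝ → ℝ) (y : ℝ) : ‖ftR f y‖ ≤ ∫ x, |f x| := by
  refine (VectorFourier.norm_fourierIntegral_le_integral_norm _ _ _ _ _).trans (le_of_eq ?_)
  simp

/-- Moving the inverse Fourier transform across the bilinear pairing (Fubini). -/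
lemma integral_fourierInv_mul {f G : ℝ → ℂ} (hf : Integrable f) (hG : Integrable G) :
    ∫ x, 𝓕⁻ f x * G x = ∫ y, f y * 𝓕⁻ G y := by
  have h := VectorFourier.integral_fourierIntegral_smul_eq_flip (μ := volume) (ν := volume)
    (L := -innerₗ ℝ) (f := f) (g := G) Real.continuous_fourierChar
    (by exact (continuous_inner (𝕜 := ℝ) (E := ℝ)).neg) hf hG
  simp only [smul_eq_mul] at h
  refine h.trans ?_
  congr 1 with x
  congr 1
  change _ = VectorFourier.fourierIntegral _ _ _ _ _
  congr 1
  ext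
  simp

/-- Moving the inverse Fourier transform across the Hermitian pairing (Fubini). -/
lemma integral_conj_mul_fourierInv {f G : ℝ → ℂ} (hf : Integrable f) (hG : Integrable G) :
    ∫ x, (starRingEnd ℂ) (f x) * 𝓕⁻ G x = ∫ y, (starRingEnd ℂ) (𝓕 f y) * G y := by
  have h := VectorFourier.integral_sesq_fourierIntegral_eq_neg_flip (μ := volume) (ν := volume)
    (L := innerₗ ℝ) (f := f) (g := G) (innerSL ℂ) Real.continuous_fourierChar
    (by exact continuous_inner) hf hG
  simp only [innerSL_apply_apply, RCLike.inner_apply] at h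
  simp only [mul_comm ((starRingEnd ℂ) _)]
  refine Eq.trans ?_ h.symm
  congr 1 with x
  congr 1
  change VectorFourier.fourierIntegral _ _ _ _ _ = _
  congr 1
  ext
  simp

/-- Plancherel on `L¹ ∩ L²`: the integral defining `𝓕⁻ G` represents the `L²` inverse Fourier
transform of `G`, since both agree as tempered distributions. -/
lemma plancherel_L1_L2 {G : ℝ → ℂ} (h1 : Integrable G) (h2 : MemLp G 2) :
    MemLp (𝓕⁻ G) 2 ∧ ∫ x, ‖𝓕⁻ G x‖ ^ 2 = ∫ y, ‖G y‖ ^ 2 := by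
  set g : Lp ℂ 2 (volume : Measure ℝ) := h2.toLp G with hg
  have hcont : Continuous (𝓕⁻ G) := by
    rw [Real.fourierInv_eq_fourier_comp_neg]
    exact VectorFourier.fourierIntegral_continuous Real.continuous_fourierChar
      (by exact continuous_inner) h1.comp_neg
  have hae : (𝓕⁻ g : Lp ℂ 2 (volume : Measure ℝ)) =ᵐ[volume] 𝓕⁻ G := by
    refine ae_eq_of_integral_contDiff_smul_eq
      ((Lp.memLp _).locallyIntegrable (by norm_num)) hcont.locallyIntegrable ?_
    intro φ hφ hφc
    have hsc : HasCompactSupport (fun x => (φ x : ℂ)) := hφc.comp_left Complex.ofReal_zero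
    have hsd : ContDiff ℝ ∞ (fun x => (φ x : ℂ)) := Complex.ofRealCLM.contDiff.comp hφ
    let ψ : 𝓢(ℝ, ℂ) := hsc.toSchwartzMap hsd
    have e := congrArg (fun T => T ψ) (Lp.fourierInv_toTemperedDistribution_eq g)
    simp only [TemperedDistribution.fourierInv_apply] at e
    rw [Lp.toTemperedDistribution_apply, Lp.toTemperedDistribution_apply] at e
    have e1 : ∫ x, φ x • (𝓕⁻ g : Lp ℂ 2 (volume : Measure ℝ)) x
        = ∫ x, ψ x • (𝓕⁻ g : Lp ℂ 2 (volume : Measure ℝ)) x := by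
      rfl
    rw [e1, ← e]
    have e2 : ∫ x, (𝓕⁻ ψ) x • g x = ∫ x, 𝓕⁻ (ψ : ℝ → ℂ) x * G x := by
      apply integral_congr_ae
      filter_upwards [h2.coeFn_toLp] with x hx
      rw [hg, hx, SchwartzMap.fourierInv_coe, smul_eq_mul]
    rw [e2, integral_fourierInv_mul ψ.integrable h1]
    rfl
  have hmem : MemLp (𝓕⁻ G) 2 := (memLp_congr_ae hae).1 (Lp.memLp _)
  refine ⟨hmem, ?_⟩
  have hn : ‖(𝓕⁻ g : Lp ℂ 2 (volume : Measure ℝ))‖ = ‖g‖ :=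
    (Lp.fourierTransformₗᵢ ℝ ℂ).symm.norm_map g
  have key : ∀ (u : Lp ℂ 2 (volume : Measure ℝ)), ∫ x, ‖u x‖ ^ 2 = ‖u‖ ^ 2 := by
    intro u
    have := L2.inner_def (𝕜 := ℂ) u u
    rw [inner_self_eq_norm_sq_to_K] at this
    simp only [inner_self_eq_norm_sq_to_K] at this
    have h3 : ((‖u‖ ^ 2 : ℝ) : ℂ) = ((∫ x, ‖u x‖ ^ 2 : ℝ) : ℂ) := by
      rw [← integral_complex_ofReal]
      push_cast
      exact this
    exact_mod_cast h3.symm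
  calc ∫ x, ‖𝓕⁻ G x‖ ^ 2 = ∫ x, ‖(𝓕⁻ g : Lp ℂ 2 (volume : Measure ℝ)) x‖ ^ 2 := by
        apply integral_congr_ae
        filter_upwards [hae] with x hx
        rw [hx]
    _ = ∫ x, ‖g x‖ ^ 2 := by rw [key, key, hn]
    _ = ∫ y, ‖G y‖ ^ 2 := by
        apply integral_congr_ae
        filter_upwards [h2.coeFn_toLp] with x hx
        rw [hg, hx]

/-! ### The symbols and the dominating weight -/

lemma tanh_pos_of_pos {x : ℝ} (hx : 0 < x) : 0 < Real.tanh x := by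
  rw [Real.tanh_eq_sinh_div_cosh]
  exact div_pos (Real.sinh_pos_iff.2 hx) (Real.cosh_pos x)

lemma tanh_le_self_of_pos {x : ℝ} (hx : 0 < x) : Real.tanh x ≤ x := by
  have hmono : MonotoneOn (fun y : ℝ => y * Real.cosh y - Real.sinh y) (Set.Ici 0) := by
    apply monotoneOn_of_deriv_nonneg (convex_Ici 0) (by fun_prop) (by fun_prop)
    intro y hy
    rw [interior_Ici] at hy
    have hd : HasDerivAt (fun y : ℝ => y * Real.cosh y - Real.sinh y)
        (1 * Real.cosh y + y * Real.sinh y - Real.cosh y) y :=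
      ((hasDerivAt_id y).mul (Real.hasDerivAt_cosh y)).sub (Real.hasDerivAt_sinh y)
    rw [hd.deriv]
    have := mul_nonneg (le_of_lt hy) (Real.sinh_nonneg_iff.2 (le_of_lt hy))
    linarith
  have h0 := hmono (Set.mem_Ici.2 le_rfl) (Set.mem_Ici.2 hx.le) hx.le
  simp only [zero_mul, Real.sinh_zero, sub_zero] at h0
  rw [Real.tanh_eq_sinh_div_cosh, div_le_iff₀ (Real.cosh_pos x)]
  linarith

lemma div_tanh_le_of_pos {x : ℝ} (hx : 0 < x) : x / Real.tanh x ≤ 1 + x := by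
  rw [div_le_iff₀ (tanh_pos_of_pos hx), Real.tanh_eq_sinh_div_cosh, ← mul_div_assoc,
    le_div_iff₀ (Real.cosh_pos x)]
  -- `x (cosh x - sinh x) = x e^{-x} ≤ x ≤ sinh x`
  have h1 : x ≤ Real.sinh x := Real.self_le_sinh_iff.2 hx.le
  have h2 : Real.cosh x - Real.sinh x ≤ 1 := by
    rw [Real.cosh_sub_sinh]; exact Real.exp_le_one_iff.2 (by linarith)
  nlinarith

lemma tanh_ratio_even (x : ℝ) : -x / Real.tanh (-x) = x / Real.tanh x := by
  rw [Real.tanh_neg, neg_div_neg_eq]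

lemma ratio_bounds {x : ℝ} (hx : x ≠ 0) :
    1 ≤ x / Real.tanh x ∧ x / Real.tanh x ≤ 1 + |x| := by
  have key : ∀ y : ℝ, 0 < y → 1 ≤ y / Real.tanh y ∧ y / Real.tanh y ≤ 1 + y := fun y hy =>
    ⟨(one_le_div (tanh_pos_of_pos hy)).2 (tanh_le_self_of_pos hy), div_tanh_le_of_pos hy⟩
  rcases lt_or_gt_of_ne hx with h | h
  · rw [← tanh_ratio_even, abs_of_neg h]
    exact key (-x) (by linarith)
  · rw [abs_of_pos h]
    exact key x h

/-- The properties of the symbols `P = tanh(hξ)/(hξ)` and `N = P^{-1/2}` on which the conservation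
law rests. -/
structure SymbolPair (h : ℝ) (P N : ℝ → ℝ) : Prop where
  even : ∀ ξ, N (-ξ) = N ξ
  one_le : ∀ ξ, 1 ≤ N ξ
  sq_le : ∀ ξ, N ξ ^ 2 ≤ 1 + h * |ξ|
  sq_mul : ∀ ξ, N ξ ^ 2 * P ξ = 1
  measN : Measurable N
  measP : Measurable P
  contP : ∀ ξ, ξ ≠ 0 → ContinuousAt P ξ

lemma symbolPair {h : ℝ} (hh : 0 < h) {P N : ℝ → ℝ}
    (hP : ∀ ξ : ℝ, P ξ = if ξ = 0 then 1 else Real.tanh (h * ξ) / (h * ξ))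
    (hN : ∀ ξ : ℝ, N ξ = if ξ = 0 then 1 else Real.sqrt (h * ξ / Real.tanh (h * ξ))) :
    SymbolPair h P N := by
  have hne : ∀ ξ : ℝ, ξ ≠ 0 → h * ξ ≠ 0 := fun ξ hξ => mul_ne_zero hh.ne' hξ
  have hct : Continuous Real.tanh := by
    have : Real.tanh = fun x => Real.sinh x / Real.cosh x :=
      funext Real.tanh_eq_sinh_div_cosh
    rw [this]
    exact Real.continuous_sinh.div Real.continuous_cosh fun x => (Real.cosh_pos x).ne'
  refine ⟨fun ξ => ?_, fun ξ => ?_, fun ξ => ?_, fun ξ => ?_, ?_, ?_, fun ξ hξ => ?_⟩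
  · rw [hN, hN, mul_neg, tanh_ratio_even]
    simp
  · rw [hN]
    split_ifs with h0
    · exact le_rfl
    · exact Real.one_le_sqrt.2 (ratio_bounds (hne ξ h0)).1
  · rw [hN]
    split_ifs with h0
    · simp [h0]
    · have := ratio_bounds (hne ξ h0)
      rw [Real.sq_sqrt (by linarith [this.1])]
      simpa [abs_mul, abs_of_pos hh] using this.2
  · rw [hN, hP]
    split_ifs with h0
    · simp
    · have := ratio_bounds (hne ξ h0)
      rw [Real.sq_sqrt (by linarith [this.1])]
      have ht : Real.tanh (h * ξ) ≠ 0 := by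
        intro h1
        rw [h1, div_zero] at this
        linarith [this.1]
      field_simp [hne ξ h0]
  · rw [funext hN]
    refine Measurable.ite (measurableSet_singleton 0) measurable_const ?_
    have := hct.measurable
    fun_prop
  · rw [funext hP]
    refine Measurable.ite (measurableSet_singleton 0) measurable_const ?_
    have := hct.measurable
    fun_prop
  · have : P =ᶠ[nhds ξ] fun ξ => Real.tanh (h * ξ) / (h * ξ) := by
      filter_upwards [isOpen_ne.mem_nhds hξ] with x hx
      rw [hP, if_neg hx]
    refine ContinuousAt.congr ?_ this.symm
    exact (hct.comp (continuous_const.mul continuous_id)).continuousAt.div (by fun_prop) (hne ξ hξ)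

namespace SymbolPair
variable {h : ℝ} {P N : ℝ → ℝ}

lemma P_pos (s : SymbolPair h P N) (ξ : ℝ) : 0 < P ξ := by
  have h1 := s.sq_mul ξ
  have h2 := s.one_le ξ
  by_contra hc
  have : N ξ ^ 2 * P ξ ≤ 0 := mul_nonpos_of_nonneg_of_nonpos (by positivity) (by linarith)
  linarith

lemma P_le (s : SymbolPair h P N) (ξ : ℝ) : P ξ ≤ 1 := by
  have h1 := s.sq_mul ξ
  have h2 := s.one_le ξ
  have h3 := s.P_pos ξ
  nlinarith [one_le_pow₀ h2 (n := 2)]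

end SymbolPair

/-- The integrable weight `(1+|x|)⁻²` used to dominate integrands, in space and in frequency. -/
noncomputable def wt (x : ℝ) : ℝ := ((1 + |x|) ^ 2)⁻¹

lemma wt_integrable : Integrable wt := by
  have h := integrable_one_add_norm (E := ℝ) (μ := volume) (r := 2) (by simp)
  refine h.congr (Filter.Eventually.of_forall fun x => ?_)
  simp only [wt, Real.norm_eq_abs]
  rw [Real.rpow_neg (by positivity)]
  norm_cast

lemma wt_pos (x : ℝ) : 0 < wt x := by unfold wt; positivity

lemma wt_nonneg (x : ℝ) : 0 ≤ wt x := (wt_pos x).le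

lemma integrable_of_le_wt {E : Type*} [NormedAddCommGroup E] {f : ℝ → E}
    (hf : AEStronglyMeasurable f) (C : ℝ) (hC : ∀ x, ‖f x‖ ≤ C * wt x) : Integrable f :=
  (wt_integrable.const_mul C).mono' hf (Filter.Eventually.of_forall hC)

lemma le_wt_iff (x a C : ℝ) : a ≤ C * wt x ↔ (1 + |x|) ^ 2 * a ≤ C := by
  unfold wt
  rw [← div_eq_mul_inv, le_div_iff₀ (by positivity), mul_comm]

/-- A Schwartz function bounded, together with its third derivative, by `C (1+|x|)⁻²` has a
Fourier transform bounded by `C' (1+|y|)⁻³`, with `C'` depending on `C` only. -/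
lemma ftR_decay (f : 𝓢(ℝ, ℝ)) (C : ℝ) (h0 : ∀ x, |f x| ≤ C * wt x)
    (h3 : ∀ x, |iteratedDeriv 3 f x| ≤ C * wt x) (y : ℝ) :
    (1 + |y|) * ‖ftR f y‖ ≤ (8 * (C * ∫ x, wt x)) * wt y := by
  have hI : ∀ u : ℝ → ℝ, (∀ x, |u x| ≤ C * wt x) → ∫ x, |u x| ≤ C * ∫ x, wt x := by
    intro u hu
    rw [← integral_const_mul]
    exact integral_mono_of_nonneg (Filter.Eventually.of_forall fun x => abs_nonneg _)
      (wt_integrable.const_mul C) (Filter.Eventually.of_forall hu)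
  have e0 : ‖ftR f y‖ ≤ C * ∫ x, wt x := (norm_ftR_le _ _).trans (hI _ h0)
  let fc : 𝓢(ℝ, ℂ) := f.postcompCLM Complex.ofRealCLM
  have hfc : (fc : ℝ → ℂ) = fun x => (f x : ℂ) := rfl
  have hit : ∀ n, iteratedDeriv n fc = fun x => ((iteratedDeriv n f x : ℝ) : ℂ) := by
    intro n
    induction n with
    | zero => simp [hfc]
    | succ n ih =>
      rw [iteratedDeriv_succ, ih]
      funext x
      rw [iteratedDeriv_succ]
      have hd : DifferentiableAt ℝ (iteratedDeriv n f) x :=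
        ((f.smooth ⊤).differentiable_iteratedDeriv n (by exact_mod_cast WithTop.coe_lt_top n)) x
      exact hd.hasDerivAt.ofReal_comp.deriv
  have hint : ∀ n : ℕ, Integrable (iteratedDeriv n fc) := by
    intro n
    have : iteratedDeriv n fc = ((SchwartzMap.derivCLM ℂ ℂ)^[n] fc : 𝓢(ℝ, ℂ)) := by
      induction n with
      | zero => simp
      | succ n ih =>
        rw [iteratedDeriv_succ, ih, Function.iterate_succ_apply']
        rfl
    rw [this]
    exact SchwartzMap.integrable _
  have hF := Real.fourier_iteratedDeriv (N := ⊤) (n := 3) (fc.smooth ⊤) (fun n _ => hint n) le_top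
  rw [hit] at hF
  have hF' : ftR (iteratedDeriv 3 f) y = (2 * Real.pi * Complex.I * y) ^ 3 • ftR f y :=
    congrFun hF y
  have e3 : (2 * Real.pi * |y|) ^ 3 * ‖ftR f y‖ ≤ C * ∫ x, wt x := by
    have := (norm_ftR_le _ y).trans (hI _ h3)
    rw [hF', norm_smul, norm_pow] at this
    simpa [abs_of_pos Real.pi_pos] using this
  rw [le_wt_iff]
  have hpi : |y| ^ 3 ≤ (2 * Real.pi * |y|) ^ 3 := by
    apply pow_le_pow_left₀ (abs_nonneg y)
    nlinarith [Real.pi_gt_three, abs_nonneg y]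
  have hc : (1 + |y|) ^ 3 ≤ 4 * (1 + |y| ^ 3) := by
    nlinarith [mul_nonneg (add_nonneg zero_le_one (abs_nonneg y)) (sq_nonneg (|y| - 1))]
  have hn := norm_nonneg (ftR f y)
  have : |y| ^ 3 * ‖ftR f y‖ ≤ C * ∫ x, wt x := (mul_le_mul_of_nonneg_right hpi hn).trans e3
  calc (1 + |y|) ^ 2 * ((1 + |y|) * ‖ftR f y‖) = (1 + |y|) ^ 3 * ‖ftR f y‖ := by ring
    _ ≤ 4 * (1 + |y| ^ 3) * ‖ftR f y‖ := mul_le_mul_of_nonneg_right hc hn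
    _ ≤ _ := by nlinarith

/-! ### Parseval identities for the multipliers -/

/-- The complexification of a real Schwartz function. -/
noncomputable def cS (f : 𝓢(ℝ, ℝ)) : 𝓢(ℝ, ℂ) := f.postcompCLM Complex.ofRealCLM

lemma cS_apply (f : 𝓢(ℝ, ℝ)) (x : ℝ) : cS f x = (f x : ℂ) := rfl

lemma ftR_cS (f : 𝓢(ℝ, ℝ)) : ftR f = ⇑(𝓕 (cS f) : 𝓢(ℝ, ℂ)) := rfl

lemma ftR_deriv (f : 𝓢(ℝ, ℝ)) (y : ℝ) :
    ftR (deriv f) y = 2 * Real.pi * Complex.I * y * ftR f y := by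
  have hd : deriv (cS f) = fun x => ((deriv f x : ℝ) : ℂ) := by
    funext x
    exact (f.hasDerivAt x).ofReal_comp.deriv
  have := Real.fourier_deriv (cS f).integrable (cS f).differentiable
    (SchwartzMap.derivCLM ℂ ℂ (cS f)).integrable
  rw [hd] at this
  exact congrFun this y

lemma ftR_deriv_cS (f : 𝓢(ℝ, ℝ)) :
    ftR (deriv f) = ⇑(𝓕 (cS (SchwartzMap.derivCLM ℝ ℝ f)) : 𝓢(ℝ, ℂ)) := rfl

lemma symbol_integrable {m : ℝ → ℝ} (hm : Measurable m) {G : ℝ → ℂ} (hG : Integrable G)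
    (hb : ∀ ξ, |m ξ| ≤ 1) : Integrable (fun y : ℝ => (m (2 * Real.pi * y) : ℂ) * G y) := by
  refine hG.norm.mono' ?_ (Filter.Eventually.of_forall fun y => ?_)
  · exact (Complex.measurable_ofReal.comp
      (hm.comp (measurable_const.mul measurable_id))).aestronglyMeasurable.mul hG.1
  · rw [norm_mul, Complex.norm_real, Real.norm_eq_abs]
    exact mul_le_of_le_one_left (norm_nonneg _) (hb _)

section Identities
variable {h : ℝ} {P N : ℝ → ℝ}

lemma SymbolPair.abs_P_le (s : SymbolPair h P N) (ξ : ℝ) : |P ξ| ≤ 1 := by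
  rw [abs_of_pos (s.P_pos ξ)]; exact s.P_le ξ

lemma SymbolPair.integrable_P_mul (s : SymbolPair h P N) (f : 𝓢(ℝ, ℝ)) :
    Integrable (fun y : ℝ => (P (2 * Real.pi * y) : ℂ) * ftR (deriv f) y) :=
  symbol_integrable s.measP (by rw [ftR_deriv_cS]; exact SchwartzMap.integrable _) s.abs_P_le

/-- Parseval for the elliptic part of the energy. -/
lemma SymbolPair.integral_sq (s : SymbolPair h P N) (hh : 0 < h) (f : 𝓢(ℝ, ℝ)) (C : ℝ)
    (hC : ∀ y, (1 + |y|) * ‖ftR f y‖ ≤ C * wt y) :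
    Integrable (fun x => fourierMult N f x ^ 2) ∧
    ∫ x, fourierMult N f x ^ 2
      = ((∫ y, N (2 * Real.pi * y) ^ 2 * ‖ftR f y‖ ^ 2 : ℝ) : ℂ) := by
  set G : ℝ → ℂ := fun y => (N (2 * Real.pi * y) : ℂ) * ftR f y with hGdef
  have hmeas : AEStronglyMeasurable G := by
    refine (Complex.measurable_ofReal.comp
      (s.measN.comp (measurable_const.mul measurable_id))).aestronglyMeasurable.mul ?_
    exact (ftR_continuous f.integrable).aestronglyMeasurable
  have hGb : ∀ y, ‖G y‖ ≤ (1 + h * (2 * Real.pi)) * C * wt y := by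
    intro y
    have h1 := s.one_le (2 * Real.pi * y)
    have h2 := s.sq_le (2 * Real.pi * y)
    rw [abs_mul, abs_of_pos (by positivity : (0:ℝ) < 2 * Real.pi)] at h2
    have h3 : N (2 * Real.pi * y) ≤ (1 + h * (2 * Real.pi)) * (1 + |y|) := by
      have h4 : N (2 * Real.pi * y) ≤ N (2 * Real.pi * y) ^ 2 := by nlinarith
      have h5 : 0 < h * (2 * Real.pi) := by positivity
      nlinarith [abs_nonneg y]
    rw [hGdef]
    simp only [norm_mul, Complex.norm_real, Real.norm_eq_abs]
    rw [abs_of_pos (by linarith)]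
    calc _ ≤ (1 + h * (2 * Real.pi)) * (1 + |y|) * ‖ftR f y‖ :=
          mul_le_mul_of_nonneg_right h3 (norm_nonneg _)
      _ = (1 + h * (2 * Real.pi)) * ((1 + |y|) * ‖ftR f y‖) := by ring
      _ ≤ (1 + h * (2 * Real.pi)) * (C * wt y) :=
          mul_le_mul_of_nonneg_left (hC y) (by positivity)
      _ = _ := by ring
  have hG1 : Integrable G := integrable_of_le_wt hmeas _ hGb
  have hG2 : MemLp G 2 := by
    rw [memLp_two_iff_integrable_sq_norm hmeas]
    set K := (1 + h * (2 * Real.pi)) * C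
    refine integrable_of_le_wt (hmeas.norm.pow 2) (K * K) fun y => ?_
    have hw1 : wt y ≤ 1 := by
      unfold wt
      exact inv_le_one_of_one_le₀ (one_le_pow₀ (by linarith [abs_nonneg y]))
    have hK : 0 ≤ K := nonneg_of_mul_nonneg_left ((norm_nonneg _).trans (hGb y)) (wt_pos y)
    rw [Real.norm_eq_abs, abs_of_nonneg (by positivity), pow_two]
    calc ‖G y‖ * ‖G y‖ ≤ K * (K * wt y) := by
          refine mul_le_mul ?_ (hGb y) (norm_nonneg _) hK
          exact (hGb y).trans (mul_le_of_le_one_right hK hw1)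
      _ = _ := by ring
  obtain ⟨hm, hi⟩ := plancherel_L1_L2 hG1 hG2
  -- `N` is even, so `N(D)f` is real and its square is the square of its modulus.
  have hsq : ∀ x, fourierMult N f x ^ 2 = ((‖𝓕⁻ G x‖ ^ 2 : ℝ) : ℂ) := by
    intro x
    rw [hGdef, ← fourierMult_eq, Complex.ofReal_pow, ← Complex.mul_conj',
      fourierMult_conj N f s.even, pow_two]
  simp only [hsq]
  refine ⟨((memLp_two_iff_integrable_sq_norm hm.1).1 hm).ofReal, ?_⟩
  rw [integral_complex_ofReal, hi]
  congr 2 with y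
  rw [hGdef]
  simp [mul_pow]

/-- The frequency-side form of the pairing of `b` with `P∂ₓa`. -/
lemma SymbolPair.pairing_eq (s : SymbolPair h P N) (a b : 𝓢(ℝ, ℝ)) (A : ℝ → ℝ)
    (hA : ∀ x, (A x : ℂ) = fourierMult P (deriv a) x) :
    ((∫ x, b x * A x : ℝ) : ℂ) = ∫ y, (starRingEnd ℂ) (ftR b y) *
      ((P (2 * Real.pi * y) : ℂ) * (2 * Real.pi * Complex.I * y * ftR a y)) := by
  have := integral_conj_mul_fourierInv (cS b).integrable (s.integrable_P_mul a)
  simp only [ftR_deriv] at this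
  refine Eq.trans ?_ this
  rw [← integral_complex_ofReal]
  congr 1 with x
  rw [Complex.ofReal_mul, hA, fourierMult_eq, cS_apply, Complex.conj_ofReal]
  simp only [ftR_deriv]

/-- `P∂ₓ` is skew-adjoint. -/
lemma SymbolPair.skew (s : SymbolPair h P N) (a b : 𝓢(ℝ, ℝ)) (A B : ℝ → ℝ)
    (hA : ∀ x, (A x : ℂ) = fourierMult P (deriv a) x)
    (hB : ∀ x, (B x : ℂ) = fourierMult P (deriv b) x) :
    ∫ x, b x * A x = - ∫ x, a x * B x := by
  have h1 := s.pairing_eq a b A hA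
  have h2 := s.pairing_eq b a B hB
  have h3 := congrArg (starRingEnd ℂ) h2
  rw [Complex.conj_ofReal, ← integral_conj] at h3
  have : ((∫ x, b x * A x : ℝ) : ℂ) = ((- ∫ x, a x * B x : ℝ) : ℂ) := by
    rw [h1, Complex.ofReal_neg, h3, ← integral_neg]
    congr 1 with y
    simp [Complex.conj_ofNat]
    ring
  exact_mod_cast this

/-- Fourier inversion turns `w = -P∂ₓu` into an identity between Fourier transforms. -/
lemma SymbolPair.ftR_eq (s : SymbolPair h P N) (u : 𝓢(ℝ, ℝ)) (w : ℝ → ℝ) (hw : Integrable w)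
    (hwu : ∀ x, (w x : ℂ) = - fourierMult P (deriv u) x) (y : ℝ) (hy : y ≠ 0) :
    ftR w y = - ((P (2 * Real.pi * y) : ℂ) * ftR (deriv u) y) := by
  set H : ℝ → ℂ := fun y => (P (2 * Real.pi * y) : ℂ) * ftR (deriv u) y with hH
  have hHi : Integrable H := s.integrable_P_mul u
  have hinv : ∀ x, 𝓕⁻ H x = ((-w x : ℝ) : ℂ) := by
    intro x
    rw [Complex.ofReal_neg, hwu, fourierMult_eq, neg_neg]
  have hF : 𝓕 H = fun x => ((-w (-x) : ℝ) : ℂ) := by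
    funext x
    rw [← hinv, Real.fourierInv_eq_fourier_neg, neg_neg]
  have hFi : Integrable (𝓕 H) := by
    rw [hF]; exact hw.comp_neg.neg.ofReal
  have hc : ContinuousAt H y := by
    refine ContinuousAt.mul ?_ ?_
    · refine Complex.continuous_ofReal.continuousAt.comp ?_
      refine ContinuousAt.comp (f := fun y : ℝ => 2 * Real.pi * y) ?_ (by fun_prop)
      exact s.contP _ (by positivity)
    · rw [ftR_deriv_cS]; exact (SchwartzMap.continuous _).continuousAt
  have := hHi.fourier_fourierInv_eq hFi hc
  rw [funext hinv] at this
  have h2 : ftR w y = - 𝓕 (fun x => ((-w x : ℝ) : ℂ)) y := by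
    unfold ftR
    rw [Real.fourier_real_eq, Real.fourier_real_eq, ← integral_neg]
    congr 1 with x
    simp
  rw [h2, this]

/-- Since `N²P = 1`, the elliptic operator `N²` undoes `P` in the equation `w = -P∂ₓu`. -/
lemma SymbolPair.integral_inner (s : SymbolPair h P N) (v u : 𝓢(ℝ, ℝ)) (w : ℝ → ℝ)
    (hw : Integrable w) (hwu : ∀ x, (w x : ℂ) = - fourierMult P (deriv u) x) :
    ∫ y, N (2 * Real.pi * y) ^ 2 * (2 * inner ℝ (ftR v y) (ftR w y))
      = -2 * ∫ x, v x * deriv u x := by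
  set d := SchwartzMap.derivCLM ℝ ℝ u with hd
  have hdx : ∀ x, d x = deriv u x := fun x => rfl
  have hpl := SchwartzMap.integral_inner_fourier_fourier (cS v) (cS d)
  have hae : (fun y : ℝ => N (2 * Real.pi * y) ^ 2 * (2 * inner ℝ (ftR v y) (ftR w y)))
      =ᵐ[volume] fun y => -2 * (inner ℂ ((𝓕 (cS v) : 𝓢(ℝ, ℂ)) y) ((𝓕 (cS d) : 𝓢(ℝ, ℂ)) y)).re := by
    have h0 : ∀ᵐ y : ℝ, y ≠ 0 := by
      simp [ae_iff, measure_singleton]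
    filter_upwards [h0] with y hy
    rw [s.ftR_eq u w hw hwu y hy, ← ftR_cS, hd, ← ftR_deriv_cS]
    have hNP := s.sq_mul (2 * Real.pi * y)
    rw [Complex.inner, RCLike.inner_apply, neg_mul, Complex.neg_re,
      mul_assoc (P (2 * Real.pi * y) : ℂ),
      Complex.re_ofReal_mul]
    linear_combination (-2 * (ftR (deriv u) y * (starRingEnd ℂ) (ftR v y)).re) * hNP
  rw [integral_congr_ae hae, integral_const_mul]
  congr 1
  have hint : Integrable fun y =>
      (inner ℂ ((𝓕 (cS v) : 𝓢(ℝ, ℂ)) y) ((𝓕 (cS d) : 𝓢(ℝ, ℂ)) y) : ℂ) := by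
    have : (fun y => (inner ℂ ((𝓕 (cS v) : 𝓢(ℝ, ℂ)) y) ((𝓕 (cS d) : 𝓢(ℝ, ℂ)) y) : ℂ))
        = ⇑(SchwartzMap.pairing (ContinuousLinearMap.mul ℝ ℂ) (𝓕 (cS d) : 𝓢(ℝ, ℂ))
          ((𝓕 (cS v) : 𝓢(ℝ, ℂ)).postcompCLM Complex.conjCLE.toContinuousLinearMap)) := by
      funext y
      rw [RCLike.inner_apply]
      rfl
    rw [this]
    exact SchwartzMap.integrable _
  have hre := integral_re hint
  simp only [RCLike.re_to_complex] at hre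
  rw [hre, hpl]
  have : (fun x => inner ℂ (cS v x) (cS d x)) = fun x => ((v x * deriv u x : ℝ) : ℂ) := by
    funext x
    rw [RCLike.inner_apply, cS_apply, cS_apply, hdx, Complex.conj_ofReal]
    push_cast; ring
  rw [this, integral_complex_ofReal, Complex.ofReal_re]

end Identities

/-! ### Differentiation in time under the integral sign -/

/-- `φt` is the time derivative of `φ` for times in `I`, both are continuous in space, and both are
dominated by `C (1+|x|)⁻²` uniformly on `I`. -/
structure TimeDeriv (I : Set ℝ) (C : ℝ) (φ φt : ℝ → ℝ → ℝ) : Prop where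
  cont : ∀ t ∈ I, Continuous (φ t)
  cont' : ∀ t ∈ I, Continuous (φt t)
  hasDeriv : ∀ t ∈ I, ∀ x, HasDerivAt (fun s => φ s x) (φt t x) t
  le : ∀ t ∈ I, ∀ x, |φ t x| ≤ C * wt x
  le' : ∀ t ∈ I, ∀ x, |φt t x| ≤ C * wt x

section TimeDerivative
variable {I : Set ℝ} {C : ℝ} {φ φt η ηt v vt : ℝ → ℝ → ℝ}

lemma wt_le_one (x : ℝ) : wt x ≤ 1 := by
  unfold wt
  exact inv_le_one_of_one_le₀ (one_le_pow₀ (by linarith [abs_nonneg x]))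

lemma TimeDeriv.const_nonneg (d : TimeDeriv I C φ φt) {t : ℝ} (ht : t ∈ I) : 0 ≤ C :=
  nonneg_of_mul_nonneg_left ((abs_nonneg _).trans (d.le t ht 0)) (wt_pos 0)

lemma TimeDeriv.abs_le (d : TimeDeriv I C φ φt) {t : ℝ} (ht : t ∈ I) (x : ℝ) : |φ t x| ≤ C :=
  (d.le t ht x).trans (mul_le_of_le_one_right (d.const_nonneg ht) (wt_le_one x))

lemma TimeDeriv.integrable (d : TimeDeriv I C φ φt) {t : ℝ} (ht : t ∈ I) : Integrable (φ t) :=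
  integrable_of_le_wt (d.cont t ht).aestronglyMeasurable C (d.le t ht)

lemma TimeDeriv.integrable' (d : TimeDeriv I C φ φt) {t : ℝ} (ht : t ∈ I) : Integrable (φt t) :=
  integrable_of_le_wt (d.cont' t ht).aestronglyMeasurable C (d.le' t ht)

/-- Differentiation in time commutes with the Fourier transform in space. -/
lemma TimeDeriv.fourier (d : TimeDeriv I C φ φt) (hI : IsOpen I) {t : ℝ} (ht : t ∈ I) (y : ℝ) :
    HasDerivAt (fun s => ftR (φ s) y) (ftR (φt t) y) t := by
  have e : ∀ f : ℝ → ℝ, ftR f y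
      = ∫ x : ℝ, Complex.exp (((-2 * Real.pi * x * y : ℝ) : ℂ) * Complex.I) • (f x : ℂ) := fun f =>
    Real.fourier_real_eq_integral_exp_smul _ _
  simp only [e]
  have hc : Continuous fun x : ℝ =>
    Complex.exp (((-2 * Real.pi * x * y : ℝ) : ℂ) * Complex.I) := by fun_prop
  refine (hasDerivAt_integral_of_dominated_loc_of_deriv_le
    (F' := fun s x => Complex.exp (((-2 * Real.pi * x * y : ℝ) : ℂ) * Complex.I) • (φt s x : ℂ))
    (bound := fun x => C * wt x)
    (hI.mem_nhds ht) ?_ ?_ ?_ ?_ (wt_integrable.const_mul C) ?_).2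
  · filter_upwards [hI.mem_nhds ht] with s hs
    exact (hc.smul (Complex.continuous_ofReal.comp (d.cont s hs))).aestronglyMeasurable
  · refine integrable_of_le_wt
      (hc.smul (Complex.continuous_ofReal.comp (d.cont t ht))).aestronglyMeasurable C fun x => ?_
    rw [norm_smul, Complex.norm_exp_ofReal_mul_I, one_mul, Complex.norm_real]
    exact d.le t ht x
  · exact (hc.smul (Complex.continuous_ofReal.comp (d.cont' t ht))).aestronglyMeasurable
  · refine Filter.Eventually.of_forall fun x s hs => ?_
    rw [norm_smul, Complex.norm_exp_ofReal_mul_I, one_mul, Complex.norm_real]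
    exact d.le' s hs x
  · refine Filter.Eventually.of_forall fun x s hs => ?_
    simpa only [smul_eq_mul] using (d.hasDeriv s hs x).ofReal_comp.const_mul _

/-- The time derivative of the local part of the energy. -/
lemma TimeDeriv.potential (dη : TimeDeriv I C η ηt) (dv : TimeDeriv I C v vt) (hI : IsOpen I)
    (g : ℝ) (hg : 0 < g) {t : ℝ} (ht : t ∈ I) :
    HasDerivAt (fun s => ∫ x, (g * η s x ^ 2 + η s x * v s x ^ 2))
      (∫ x, (2 * g * η t x * ηt t x + ηt t x * v t x ^ 2 + 2 * η t x * v t x * vt t x)) t := by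
  have hC := dη.const_nonneg ht
  have hint : ∀ s ∈ I, Continuous fun x => g * η s x ^ 2 + η s x * v s x ^ 2 := fun s hs =>
    have h1 := dη.cont s hs
    have h2 := dv.cont s hs
    by fun_prop
  refine (hasDerivAt_integral_of_dominated_loc_of_deriv_le
    (F' := fun t x => 2 * g * η t x * ηt t x + ηt t x * v t x ^ 2 + 2 * η t x * v t x * vt t x)
    (bound := fun x => (2 * g * C * C + C * C ^ 2 + 2 * C * C * C) * wt x)
    (hI.mem_nhds ht) ?_ ?_ ?_ ?_ (wt_integrable.const_mul _) ?_).2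
  · filter_upwards [hI.mem_nhds ht] with s hs
    exact (hint s hs).aestronglyMeasurable
  · refine integrable_of_le_wt (hint t ht).aestronglyMeasurable (g * C * C + C * C ^ 2) fun x => ?_
    have h1 := dη.le t ht x
    have h2 := dη.abs_le ht x
    have h3 := dv.abs_le ht x
    calc ‖g * η t x ^ 2 + η t x * v t x ^ 2‖ ≤ g * |η t x| * |η t x| + |η t x| * |v t x| ^ 2 := by
          refine (norm_add_le _ _).trans (le_of_eq ?_)
          simp only [Real.norm_eq_abs, abs_mul, abs_pow, abs_of_pos hg]
          ring
      _ ≤ g * C * (C * wt x) + (C * wt x) * C ^ 2 := by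
          have := wt_nonneg x
          gcongr
      _ = _ := by ring
  · have h1 := dη.cont t ht
    have h2 := dv.cont t ht
    have h3 := dη.cont' t ht
    have h4 := dv.cont' t ht
    exact Continuous.aestronglyMeasurable (by fun_prop)
  · refine Filter.Eventually.of_forall fun x s hs => ?_
    have h1 := dη.le' s hs x
    have h2 := dη.abs_le hs x
    have h3 := dv.abs_le hs x
    have h4 := dv.le' s hs x
    calc _ ≤ 2 * g * |η s x| * |ηt s x| + |ηt s x| * |v s x| ^ 2
            + 2 * |η s x| * |v s x| * |vt s x| := by
          refine (norm_add₃_le).trans (le_of_eq ?_)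
          simp only [Real.norm_eq_abs, abs_mul, abs_pow, abs_of_pos hg, abs_two]
      _ ≤ 2 * g * C * (C * wt x) + (C * wt x) * C ^ 2 + 2 * C * C * (C * wt x) := by
          have := wt_nonneg x
          gcongr
      _ = _ := by ring
  · refine Filter.Eventually.of_forall fun x s hs => ?_
    have h1 := dη.hasDeriv s hs x
    have h2 := dv.hasDeriv s hs x
    convert! ((h1.pow 2).const_mul g).add (h1.mul (h2.pow 2)) using 1
    simp
    ring

/-- The time derivative of the nonlocal part of the energy, on the Fourier side. The decay `hK`
uniform in time compensates for the linear growth of `N²`. -/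
lemma TimeDeriv.elliptic {h : ℝ} {P N : ℝ → ℝ} (s : SymbolPair h P N) (hh : 0 < h)
    (dv : TimeDeriv I C v vt) (hI : IsOpen I) {K : ℝ}
    (hK : ∀ t ∈ I, ∀ y, (1 + |y|) * ‖ftR (v t) y‖ ≤ K * wt y) {t : ℝ} (ht : t ∈ I) :
    HasDerivAt (fun s => ∫ y, N (2 * Real.pi * y) ^ 2 * ‖ftR (v s) y‖ ^ 2)
      (∫ y, N (2 * Real.pi * y) ^ 2 * (2 * inner ℝ (ftR (v t) y) (ftR (vt t) y)))
      t := by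
  have hN : AEStronglyMeasurable fun y : ℝ => N (2 * Real.pi * y) ^ 2 :=
    ((s.measN.comp (measurable_const.mul measurable_id)).pow_const 2).aestronglyMeasurable
  have hF : ∀ t ∈ I, Continuous (ftR (v t)) := fun t ht => ftR_continuous (dv.integrable ht)
  have hF' : ∀ t ∈ I, Continuous (ftR (vt t)) := fun t ht =>
    ftR_continuous (dv.integrable' ht)
  have hC := dv.const_nonneg ht
  have hJ : 0 ≤ ∫ x, wt x := integral_nonneg wt_nonneg
  have hsup : ∀ u : ℝ → ℝ, (∀ x, |u x| ≤ C * wt x) → ∀ y, ‖ftR u y‖ ≤ C * ∫ x, wt x := by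
    intro u hu y
    refine (norm_ftR_le _ _).trans ?_
    rw [← integral_const_mul]
    exact integral_mono_of_nonneg (Filter.Eventually.of_forall fun x => abs_nonneg _)
      (wt_integrable.const_mul C) (Filter.Eventually.of_forall hu)
  have hNF : ∀ t ∈ I, ∀ y, N (2 * Real.pi * y) ^ 2 * ‖ftR (v t) y‖
      ≤ (1 + h * (2 * Real.pi)) * K * wt y := by
    intro t ht y
    have h2 := s.sq_le (2 * Real.pi * y)
    rw [abs_mul, abs_of_pos (by positivity : (0:ℝ) < 2 * Real.pi)] at h2
    have h5 : 0 < h * (2 * Real.pi) := by positivity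
    have h3 : N (2 * Real.pi * y) ^ 2 ≤ (1 + h * (2 * Real.pi)) * (1 + |y|) := by
      nlinarith [abs_nonneg y]
    calc _ ≤ (1 + h * (2 * Real.pi)) * (1 + |y|) * ‖ftR (v t) y‖ :=
          mul_le_mul_of_nonneg_right h3 (norm_nonneg _)
      _ = (1 + h * (2 * Real.pi)) * ((1 + |y|) * ‖ftR (v t) y‖) := by ring
      _ ≤ (1 + h * (2 * Real.pi)) * (K * wt y) :=
          mul_le_mul_of_nonneg_left (hK t ht y) (by positivity)
      _ = _ := by ring
  refine (hasDerivAt_integral_of_dominated_loc_of_deriv_le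
    (F' := fun t y => N (2 * Real.pi * y) ^ 2 *
      (2 * inner ℝ (ftR (v t) y) (ftR (vt t) y)))
    (bound := fun y => (2 * (C * ∫ x, wt x) * ((1 + h * (2 * Real.pi)) * K)) * wt y)
    (hI.mem_nhds ht) ?_ ?_ ?_ ?_ (wt_integrable.const_mul _) ?_).2
  · filter_upwards [hI.mem_nhds ht] with s hs
    exact hN.mul ((hF s hs).norm.pow 2).aestronglyMeasurable
  · refine integrable_of_le_wt (hN.mul ((hF t ht).norm.pow 2).aestronglyMeasurable)
      ((C * ∫ x, wt x) * ((1 + h * (2 * Real.pi)) * K)) fun y => ?_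
    rw [Real.norm_eq_abs, abs_of_nonneg (by positivity)]
    calc _ = ‖ftR (v t) y‖ * (N (2 * Real.pi * y) ^ 2 * ‖ftR (v t) y‖) := by ring
      _ ≤ (C * ∫ x, wt x) * ((1 + h * (2 * Real.pi)) * K * wt y) := by
          refine mul_le_mul (hsup _ (dv.le t ht) y) (hNF t ht y) (by positivity) (by positivity)
      _ = _ := by ring
  · exact hN.mul (((hF t ht).inner (𝕜 := ℝ) (hF' t ht)).const_mul 2).aestronglyMeasurable
  · refine Filter.Eventually.of_forall fun y s hs => ?_
    rw [norm_mul, norm_mul, Real.norm_eq_abs, abs_of_nonneg (sq_nonneg (N _)), Real.norm_two]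
    have h1 := norm_inner_le_norm (𝕜 := ℝ) (ftR (v s) y) (ftR (vt s) y)
    have h2 := hsup _ (dv.le' s hs) y
    calc _ ≤ N (2 * Real.pi * y) ^ 2 *
            (2 * (‖ftR (v s) y‖ * ‖ftR (vt s) y‖)) := by gcongr
      _ = 2 * ‖ftR (vt s) y‖ * (N (2 * Real.pi * y) ^ 2 * ‖ftR (v s) y‖) := by ring
      _ ≤ 2 * (C * ∫ x, wt x) * ((1 + h * (2 * Real.pi)) * K * wt y) := by
          refine mul_le_mul (by gcongr) (hNF s hs y) (by positivity) (by positivity)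
      _ = _ := by ring
  · refine Filter.Eventually.of_forall fun y s hs => ?_
    exact ((dv.fourier hI hs y).norm_sq).const_mul _

end TimeDerivative

/-! ### Conservation of the energy -/

/-- The product of two real Schwartz functions. -/
noncomputable def mulS (a b : 𝓢(ℝ, ℝ)) : 𝓢(ℝ, ℝ) :=
  SchwartzMap.pairing (ContinuousLinearMap.mul ℝ ℝ) a b

lemma mulS_apply (a b : 𝓢(ℝ, ℝ)) (x : ℝ) : mulS a b x = a x * b x := rfl

section Balance
variable {h : ℝ} {P N : ℝ → ℝ}

lemma SymbolPair.fourierMult_deriv_add (s : SymbolPair h P N) (g : ℝ) (a b : 𝓢(ℝ, ℝ)) (x : ℝ) :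
    fourierMult P (deriv (g • a + b : 𝓢(ℝ, ℝ))) x
      = g * fourierMult P (deriv a) x + fourierMult P (deriv b) x := by
  have hF : ∀ y, ftR (deriv (g • a + b : 𝓢(ℝ, ℝ))) y = g * ftR (deriv a) y + ftR (deriv b) y := by
    intro y
    have e : cS (g • a + b) = (g : ℂ) • cS a + cS b := by
      ext x
      simp [cS_apply]
    rw [ftR_deriv, ftR_deriv, ftR_deriv, ftR_cS, ftR_cS, ftR_cS, e, FourierTransform.fourier_add,
      FourierTransform.fourier_smul, add_apply, smul_apply, smul_eq_mul]
    ring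
  rw [fourierMult_eq, fourierMult_eq, fourierMult_eq, Real.fourierInv_eq', Real.fourierInv_eq',
    Real.fourierInv_eq', ← integral_const_mul, ← integral_add]
  · congr 1 with y
    rw [hF, smul_eq_mul, smul_eq_mul, smul_eq_mul]
    ring
  · refine Integrable.const_mul ?_ _
    have := (Real.fourierIntegral_convergent_iff (-x)).2 (s.integrable_P_mul a)
    refine this.congr (Filter.Eventually.of_forall fun y => ?_)
    simp [Circle.smul_def, Real.fourierChar_apply, mul_comm, mul_left_comm]
  · have := (Real.fourierIntegral_convergent_iff (-x)).2 (s.integrable_P_mul b)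
    refine this.congr (Filter.Eventually.of_forall fun y => ?_)
    simp [Circle.smul_def, Real.fourierChar_apply, mul_comm, mul_left_comm]

/-- The instantaneous rate of change of the energy vanishes: with the variational derivatives
`u = gη + v²/2` and `p = ηv`, the nonlocal contributions cancel because `P∂ₓ` is skew-adjoint, and
the remaining ones add up to a multiple of the integral of `(uv)ₓ`. -/
lemma SymbolPair.energy_balance (s : SymbolPair h P N) (g : ℝ) (η v : 𝓢(ℝ, ℝ)) (a b : ℝ → ℝ)
    (ha : Integrable a) (hb : Integrable b)
    (hcη : ∀ x, (a x : ℂ) = -(h : ℂ) * ((deriv v x : ℝ) : ℂ)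
      - fourierMult P (deriv fun y => η y * v y) x)
    (hcv : ∀ x, (b x : ℂ) = -(g : ℂ) * fourierMult P (deriv η) x
      - fourierMult P (deriv fun y => v y ^ 2 / 2) x) :
    (∫ x, (2 * g * η x * a x + a x * v x ^ 2 + 2 * η x * v x * b x))
      + h * ∫ y, N (2 * Real.pi * y) ^ 2 * (2 * inner ℝ (ftR v y) (ftR b y)) = 0 := by
  set q : 𝓢(ℝ, ℝ) := (1 / 2 : ℝ) • mulS v v with hq
  set u : 𝓢(ℝ, ℝ) := g • η + q with hu
  set p : 𝓢(ℝ, ℝ) := mulS η v with hp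
  have hqx : ⇑q = fun y => v y ^ 2 / 2 := by
    funext y
    simp [hq, mulS_apply]
    ring
  have hux : ∀ x, u x = g * η x + v x ^ 2 / 2 := fun x => by simp [hu, hqx]
  have hpx : ⇑p = fun y => η y * v y := rfl
  have hbu : ∀ x, (b x : ℂ) = -fourierMult P (deriv u) x := by
    intro x
    rw [hcv, hu, s.fourierMult_deriv_add, hqx]
    ring
  have hA : ∀ x, ((-(h * deriv v x) - a x : ℝ) : ℂ) = fourierMult P (deriv p) x := by
    intro x
    push_cast
    rw [hcη, hpx]
    ring
  have hB : ∀ x, ((-b x : ℝ) : ℂ) = fourierMult P (deriv u) x := by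
    intro x
    rw [Complex.ofReal_neg, hbu, neg_neg]
  have hskew := s.skew p u _ _ hA hB
  have bdd : ∀ f : 𝓢(ℝ, ℝ), ∀ w : ℝ → ℝ, Integrable w → Integrable fun x => f x * w x := by
    intro f w hw
    exact hw.bdd_mul f.continuous.aestronglyMeasurable
      (Filter.Eventually.of_forall fun x => SchwartzMap.norm_le_seminorm ℝ f x)
  have h1 : Integrable fun x => u x * a x := bdd u a ha
  have h2 : Integrable fun x => p x * b x := bdd p b hb
  have h3 : Integrable fun x => u x * deriv v x := bdd u _ (SchwartzMap.derivCLM ℝ ℝ v).integrable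
  have e1 : ∫ x, (2 * g * η x * a x + a x * v x ^ 2 + 2 * η x * v x * b x)
      = 2 * (∫ x, u x * a x) + 2 * ∫ x, p x * b x := by
    rw [← integral_const_mul, ← integral_const_mul,
      ← integral_add (h1.const_mul 2) (h2.const_mul 2)]
    congr 1 with x
    rw [hux, hpx]
    ring
  have e2 : ∫ x, u x * (-(h * deriv v x) - a x)
      = -h * (∫ x, u x * deriv v x) - ∫ x, u x * a x := by
    rw [← integral_const_mul, ← integral_sub (h3.const_mul _) h1]
    congr 1 with x
    ring
  have e3 : ∫ x, p x * -b x = -∫ x, p x * b x := by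
    rw [← integral_neg]
    congr 1 with x
    ring
  have e4 : ∫ x, v x * deriv u x = - ∫ x, u x * deriv v x := by
    rw [SchwartzMap.integral_mul_deriv_eq_neg_deriv_mul]
    simp only [mul_comm]
  rw [e1, s.integral_inner v u b hb hbu, e4]
  rw [e2, e3] at hskew
  linear_combination -2 * hskew

end Balance

/-- The time derivative of a smooth function of `(t, x)` exists and is continuous in `x`. -/
lemma time_deriv_smooth {φ : ℝ → ℝ → ℝ}
    (hφ : ContDiff ℝ (⊤ : ℕ∞) (fun p : ℝ × ℝ => φ p.1 p.2)) (t : ℝ) :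
    (∀ x, HasDerivAt (fun s => φ s x) (deriv (fun s => φ s x) t) t) ∧
      Continuous fun x => deriv (fun s => φ s x) t := by
  have key : ∀ x, HasDerivAt (fun s => φ s x)
      (fderiv ℝ (fun p : ℝ × ℝ => φ p.1 p.2) (t, x) (1, 0)) t := by
    intro x
    have h1 := (hφ.differentiable (by simp) (t, x)).hasFDerivAt
    have h2 : HasDerivAt (fun s : ℝ => (s, x)) ((1 : ℝ), (0 : ℝ)) t :=
      (hasDerivAt_id t).prodMk (hasDerivAt_const t x)
    exact h1.comp_hasDerivAt t h2
  refine ⟨fun x => (key x).deriv ▸ key x, ?_⟩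
  rw [show (fun x => deriv (fun s => φ s x) t) = fun x =>
    fderiv ℝ (fun p : ℝ × ℝ => φ p.1 p.2) (t, x) (1, 0) from funext fun x => (key x).deriv]
  have := hφ.continuous_fderiv (by simp)
  fun_prop

/-- the Whitham–Boussinesq energy
`ℋ = (1/2)∫ gη² + h(K⁻¹v)² + ηv² dx` is conserved along smooth, Schwartz-in-space
solutions of the deterministic Whitham–Boussinesq system
`∂ₜη = −h∂ₓv − K²∂ₓ(ηv)`, `∂ₜv = −gK²∂ₓη − K²∂ₓ(v²/2)`. -/
theorem stmt_14 (g h : ℝ) (hg : 0 < g) (hh : 0 < h)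
    (Psym Nsym : ℝ → ℝ)
    (hPsym : ∀ ξ : ℝ, Psym ξ = if ξ = 0 then 1 else Real.tanh (h * ξ) / (h * ξ))
    (hNsym : ∀ ξ : ℝ, Nsym ξ = if ξ = 0 then 1 else Real.sqrt (h * ξ / Real.tanh (h * ξ)))
    (η v : ℝ → ℝ → ℝ)
    (hηsmooth : ContDiff ℝ (⊤ : ℕ∞) (fun p : ℝ × ℝ => η p.1 p.2))
    (hvsmooth : ContDiff ℝ (⊤ : ℕ∞) (fun p : ℝ × ℝ => v p.1 p.2))
    -- (a) the sections are Schwartz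
    (ha : ∀ t : ℝ, (∃ f : SchwartzMap ℝ ℝ, ∀ x, f x = η t x) ∧
      (∃ f : SchwartzMap ℝ ℝ, ∀ x, f x = v t x))
    -- (b) locally-in-time uniform Schwartz bounds
    (hb : ∀ I : Set ℝ, IsCompact I → ∀ k n : ℕ, ∃ C : ℝ, ∀ t ∈ I, ∀ x : ℝ,
      (1 + |x|) ^ k *
        (|iteratedDeriv n (η t) x| + |iteratedDeriv n (v t) x|
          + |deriv (fun s => iteratedDeriv n (η s) x) t|
          + |deriv (fun s => iteratedDeriv n (v s) x) t|) ≤ C)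
    -- (c) the deterministic Whitham–Boussinesq system
    (hceta : ∀ t x : ℝ,
      ((deriv (fun s => η s x) t : ℝ) : ℂ)
        = -(h : ℂ) * ((deriv (v t) x : ℝ) : ℂ)
          - fourierMult Psym (deriv (fun y => η t y * v t y)) x)
    (hcv : ∀ t x : ℝ,
      ((deriv (fun s => v s x) t : ℝ) : ℂ)
        = -(g : ℂ) * fourierMult Psym (deriv (η t)) x
          - fourierMult Psym (deriv (fun y => v t y ^ 2 / 2)) x)
    (E : ℝ → ℂ)
    (hE : ∀ t : ℝ, E t = (1 / 2 : ℂ) * ∫ x : ℝ,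
      ((g * η t x ^ 2 : ℝ) : ℂ) + (h : ℂ) * (fourierMult Nsym (v t) x) ^ 2
        + ((η t x * v t x ^ 2 : ℝ) : ℂ)) :
    ∀ t s : ℝ, E t = E s := by
  have s : SymbolPair h Psym Nsym := symbolPair hh hPsym hNsym
  choose fη hfη using fun t => (ha t).1
  choose fv hfv using fun t => (ha t).2
  have eη : ∀ t, η t = fη t := fun t => funext fun x => (hfη t x).symm
  have ev : ∀ t, v t = fv t := fun t => funext fun x => (hfv t x).symm
  -- Uniform bounds near a given time, for the fields and for their Fourier transforms.
  have hloc : ∀ t₀ : ℝ, ∃ C K : ℝ,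
      TimeDeriv (Set.Ioo (t₀ - 1) (t₀ + 1)) C η (fun t x => deriv (fun s => η s x) t) ∧
      TimeDeriv (Set.Ioo (t₀ - 1) (t₀ + 1)) C v (fun t x => deriv (fun s => v s x) t) ∧
      ∀ t ∈ Set.Ioo (t₀ - 1) (t₀ + 1), ∀ y, (1 + |y|) * ‖ftR (v t) y‖ ≤ K * wt y := by
    intro t₀
    obtain ⟨C₀, hC₀⟩ := hb (Set.Icc (t₀ - 1) (t₀ + 1)) isCompact_Icc 2 0
    obtain ⟨C₃, hC₃⟩ := hb (Set.Icc (t₀ - 1) (t₀ + 1)) isCompact_Icc 2 3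
    simp only [iteratedDeriv_zero] at hC₀
    have hsub : ∀ t ∈ Set.Ioo (t₀ - 1) (t₀ + 1), t ∈ Set.Icc (t₀ - 1) (t₀ + 1) :=
      fun t ht => Set.Ioo_subset_Icc_self ht
    have hmax : ∀ t ∈ Set.Ioo (t₀ - 1) (t₀ + 1), ∀ x,
        |η t x| + |v t x| + |deriv (fun s => η s x) t| + |deriv (fun s => v s x) t|
          ≤ max C₀ C₃ * wt x := fun t ht x =>
      (le_wt_iff _ _ _).2 ((hC₀ t (hsub t ht) x).trans (le_max_left _ _))
    refine ⟨max C₀ C₃, 8 * (max C₀ C₃ * ∫ x, wt x), ⟨?_, ?_, ?_, ?_, ?_⟩, ⟨?_, ?_, ?_, ?_, ?_⟩, ?_⟩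
    · intro t _; rw [eη]; exact (fη t).continuous
    · exact fun t _ => (time_deriv_smooth hηsmooth t).2
    · exact fun t _ => (time_deriv_smooth hηsmooth t).1
    · intro t ht x
      refine le_trans ?_ (hmax t ht x)
      have := abs_nonneg (v t x)
      have := abs_nonneg (deriv (fun s => η s x) t)
      have := abs_nonneg (deriv (fun s => v s x) t)
      linarith
    · intro t ht x
      refine le_trans ?_ (hmax t ht x)
      have := abs_nonneg (v t x)
      have := abs_nonneg (η t x)
      have := abs_nonneg (deriv (fun s => v s x) t)
      linarith
    · intro t _; rw [ev]; exact (fv t).continuous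
    · exact fun t _ => (time_deriv_smooth hvsmooth t).2
    · exact fun t _ => (time_deriv_smooth hvsmooth t).1
    · intro t ht x
      refine le_trans ?_ (hmax t ht x)
      have := abs_nonneg (η t x)
      have := abs_nonneg (deriv (fun s => η s x) t)
      have := abs_nonneg (deriv (fun s => v s x) t)
      linarith
    · intro t ht x
      refine le_trans ?_ (hmax t ht x)
      have := abs_nonneg (v t x)
      have := abs_nonneg (η t x)
      have := abs_nonneg (deriv (fun s => η s x) t)
      linarith
    · intro t ht y
      rw [ev]
      refine ftR_decay (fv t) _ (fun x => ?_) (fun x => ?_) y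
      · rw [← ev]
        refine le_trans ?_ (hmax t ht x)
        have := abs_nonneg (η t x)
        have := abs_nonneg (deriv (fun s => η s x) t)
        have := abs_nonneg (deriv (fun s => v s x) t)
        linarith
      · rw [← ev, le_wt_iff]
        refine le_trans (mul_le_mul_of_nonneg_left ?_ (by positivity))
          ((hC₃ t (hsub t ht) x).trans (le_max_right _ _))
        have := abs_nonneg (iteratedDeriv 3 (η t) x)
        have := abs_nonneg (deriv (fun s => iteratedDeriv 3 (η s) x) t)
        have := abs_nonneg (deriv (fun s => iteratedDeriv 3 (v s) x) t)
        linarith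
  have hmem : ∀ t : ℝ, t ∈ Set.Ioo (t - 1) (t + 1) := fun t => by constructor <;> linarith
  set e : ℝ → ℝ := fun t => 1 / 2 * ((∫ x, (g * η t x ^ 2 + η t x * v t x ^ 2))
    + h * ∫ y, Nsym (2 * Real.pi * y) ^ 2 * ‖ftR (v t) y‖ ^ 2) with he
  have hEe : ∀ t, E t = (e t : ℂ) := by
    intro t
    obtain ⟨C, K, dη, dv, hK⟩ := hloc t
    have hsq := s.integral_sq hh (fv t) K (fun y => by rw [← ev]; exact hK t (hmem t) y)
    rw [← ev] at hsq
    have hpot : Integrable fun x => g * η t x ^ 2 + η t x * v t x ^ 2 := by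
      have : (fun x => g * η t x ^ 2 + η t x * v t x ^ 2)
          = ⇑(g • mulS (fη t) (fη t) + mulS (fη t) (mulS (fv t) (fv t))) := by
        funext x
        simp only [add_apply, smul_apply, mulS_apply, smul_eq_mul,
          eη, ev]
        ring
      rw [this]
      exact SchwartzMap.integrable _
    have hpotc : Integrable fun x => ((g * η t x ^ 2 + η t x * v t x ^ 2 : ℝ) : ℂ) := hpot.ofReal
    have hsplit : ∫ x : ℝ, (((g * η t x ^ 2 : ℝ) : ℂ) + (h : ℂ) * (fourierMult Nsym (v t) x) ^ 2
          + ((η t x * v t x ^ 2 : ℝ) : ℂ))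
        = (∫ x, ((g * η t x ^ 2 + η t x * v t x ^ 2 : ℝ) : ℂ))
          + h * ∫ x, fourierMult Nsym (v t) x ^ 2 := by
      rw [← integral_const_mul, ← integral_add hpotc (hsq.1.const_mul (h : ℂ))]
      congr 1 with x
      push_cast
      ring
    rw [hE, hsplit, hsq.2, integral_complex_ofReal, he]
    push_cast
    ring
  have hde : ∀ t, HasDerivAt e 0 t := by
    intro t
    obtain ⟨C, K, dη, dv, hK⟩ := hloc t
    have hd := ((dη.potential dv isOpen_Ioo g hg (hmem t)).add
      ((TimeDeriv.elliptic s hh dv isOpen_Ioo hK (hmem t)).const_mul h)).const_mul (1 / 2)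
    have hbal := s.energy_balance g (fη t) (fv t) _ _ (dη.integrable' (hmem t))
      (dv.integrable' (hmem t)) (by simpa only [eη, ev] using hceta t)
      (by simpa only [eη, ev] using hcv t)
    rw [← eη, ← ev] at hbal
    rw [hbal, mul_zero] at hd
    exact hd
  intro t₁ t₂
  rw [hEe, hEe, is_const_of_deriv_eq_zero (fun t => (hde t).differentiableAt)
    (fun t => (hde t).deriv) t₁ t₂]
end

section
/- Let g, h > 0 and let K be the Fourier multiplier with even symbol √(tanh(hξ)/(hξ)) (value 1 at ξ = 0). Let r: ℝ × ℝ → ℝ be a smooth function of (t, x) such that: (a) for every t the section x ↦ r(t, x) is Schwartz; (b) for every compact interval I ⊂ ℝ and all nonnegative integers k, n, sup_{t ∈ I, x ∈ ℝ} (1 + |x|)^k ( |∂_x^n r(t,x)| + |∂_t∂_x^n r(t,x)| ) < ∞; and (c) r satisfies the deterministic Whitham equation ∂_t r = −√(gh)·∂_x( (K r)(t, ·) + (3/(4h))·r² ) for all (t, x). Then the functional t ↦ 𝒬(t) = g∫_ℝ ( r(t,x)·(K r(t, ·))(x) + r(t,x)³/(2h) ) dx is constant in t. -/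
/-!
Write `P = Kr + (3/(4h)) r²`. Formally `d𝒬/dt = 2g ∫ ∂ₜr · P dx`, and the equation says
`∂ₜr = -√(gh) ∂ₓP`, so the integrand is the `x`-derivative of `-(√(gh)/2) P²`, which vanishes
at `±∞`.

* The quadratic part `∫ r · Kr` is differentiated on the Fourier side (`hasDerivAt_quadratic`).
  By Fubini it equals `(2π)⁻¹ ∫ m(ξ) r̂(ξ) r̂(-ξ) dξ`. The derivative of the integrand is dominated
  using `r̂ = O((1 + ξ²)⁻¹)` and a mere sup bound on the transform of `∂ₜr`, so no derivative
  `∂ₓⁿ∂ₜr` enters. Evenness of the symbol identifies the two terms of the product rule, and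
  Fubini again turns the result into `2 ∫ ∂ₜr · Kr`.
* The cubic part is differentiated directly under the integral (`hasDerivAt_cubic`).
* `Kr` is an inverse Fourier integral of `φ = m r̂` with `φ` and `ξ φ` integrable: it is therefore
  bounded, differentiable (`differentiable_inverse_fourier`), and tends to zero at infinity by the
  Riemann–Lebesgue lemma (`tendsto_inverse_fourier`). Thus the fundamental theorem of calculus on
  `ℝ` gives `∫ ∂ₜr · P = 0`.

Of the symbol only measurability, boundedness and evenness matter.
-/

open MeasureTheory

open Filter Topology

/-! ### Fourier transform: bounds, derivatives, duality -/

lemma norm_exp_pos (ξ x : ℝ) : ‖Complex.exp (Complex.I * ξ * x)‖ = 1 := by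
  rw [show Complex.I * ξ * x = ((ξ * x : ℝ) : ℂ) * Complex.I by push_cast; ring]
  exact Complex.norm_exp_ofReal_mul_I _

lemma norm_exp_neg (ξ x : ℝ) : ‖Complex.exp (-(Complex.I * ξ * x))‖ = 1 := by
  rw [show -(Complex.I * ξ * x) = ((-(ξ * x) : ℝ) : ℂ) * Complex.I by push_cast; ring]
  exact Complex.norm_exp_ofReal_mul_I _

lemma integrable_of_decay {f : ℝ → ℝ} {C : ℝ} (hf : Continuous f)
    (hC : ∀ x, |f x| ≤ C * (1 + x ^ 2)⁻¹) : Integrable f :=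
  (integrable_inv_one_add_sq.const_mul C).mono' hf.aestronglyMeasurable
    (ae_of_all _ hC)

lemma norm_fourierInt_le {f : ℝ → ℝ} {C : ℝ}
    (hC : ∀ x, |f x| ≤ C * (1 + x ^ 2)⁻¹) (ξ : ℝ) :
    ‖fourierInt f ξ‖ ≤ C * Real.pi := by
  rw [← integral_univ_inv_one_add_sq, ← integral_const_mul]
  refine norm_integral_le_of_norm_le (integrable_inv_one_add_sq.const_mul C)
    (ae_of_all _ fun x => ?_)
  rw [norm_mul, norm_exp_neg, one_mul, Complex.norm_real]
  exact hC x

lemma integrable_fourier_kernel {f : ℝ → ℝ} (hf : Integrable f) (ξ : ℝ) :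
    Integrable fun x : ℝ => Complex.exp (-(Complex.I * ξ * x)) * (f x : ℂ) := by
  refine hf.ofReal.bdd_mul (c := 1) (by fun_prop) (ae_of_all _ fun x => ?_)
  rw [norm_exp_neg]

lemma continuous_fourierInt {f : ℝ → ℝ} (hf : Integrable f) : Continuous (fourierInt f) := by
  refine continuous_of_dominated (bound := fun x => ‖f x‖)
    (fun ξ => (integrable_fourier_kernel hf ξ).aestronglyMeasurable)
    (fun ξ => ae_of_all _ fun x => ?_) hf.norm (ae_of_all _ fun x => by fun_prop)
  rw [norm_mul, norm_exp_neg, one_mul, Complex.norm_real]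

lemma fourierInt_deriv {f : ℝ → ℝ} (hd : Differentiable ℝ f) (hf : Integrable f)
    (hf' : Integrable (deriv f)) (ξ : ℝ) :
    fourierInt (deriv f) ξ = Complex.I * ξ * fourierInt f ξ := by
  have hu : ∀ x : ℝ, HasDerivAt (fun x : ℝ => Complex.exp (-(Complex.I * ξ * x)))
      (-(Complex.I * ξ) * Complex.exp (-(Complex.I * ξ * x))) x := fun x => by
    have h1 : HasDerivAt (fun x : ℝ => -(Complex.I * ξ * x)) (-(Complex.I * ξ * 1)) x :=
      ((Complex.ofRealCLM.hasDerivAt (x := x)).const_mul _).neg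
    refine (h1.cexp).congr_deriv ?_
    ring
  have key := integral_mul_deriv_eq_deriv_mul_of_integrable
    (u := fun x : ℝ => Complex.exp (-(Complex.I * ξ * x))) (v := fun x => (f x : ℂ))
    (v' := fun x => ((deriv f x : ℝ) : ℂ)) (fun x _ => hu x)
    (fun x _ => (hd x).hasDerivAt.ofReal_comp) (integrable_fourier_kernel hf' ξ)
    (by
      have := (integrable_fourier_kernel hf ξ).const_mul (-(Complex.I * ξ))
      refine this.congr (ae_of_all _ fun x => ?_)
      simp only [Pi.mul_apply]; ring)
    (integrable_fourier_kernel hf ξ)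
  simp only [fourierInt]
  rw [key, ← integral_const_mul, ← integral_neg]
  congr 1; ext x; ring

/-- Three derivatives decaying like `(1 + x²)⁻¹` make both `f̂` and `ξ f̂` be `O((1 + ξ²)⁻¹)`:
`(1 + |ξ|)(1 + ξ²)` is the sum of `|ξ|ⁿ` for `n ≤ 3`, and `|ξ|ⁿ|f̂|` is bounded by the `L¹` norm of
the `n`-th derivative. -/
lemma fourierInt_weighted {f : ℝ → ℝ} {C : ℝ} (hs : ContDiff ℝ (⊤ : ℕ∞) f)
    (hC : ∀ n ≤ 3, ∀ x, |iteratedDeriv n f x| ≤ C * (1 + x ^ 2)⁻¹) (ξ : ℝ) :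
    ‖fourierInt f ξ‖ * (1 + |ξ|) ≤ 4 * C * Real.pi * (1 + ξ ^ 2)⁻¹ := by
  have hcont : ∀ n, Continuous (iteratedDeriv n f) := fun n =>
    hs.continuous_iteratedDeriv n (by exact_mod_cast le_top)
  have hdiff : ∀ n, Differentiable ℝ (iteratedDeriv n f) := fun n =>
    hs.differentiable_iteratedDeriv n (by exact_mod_cast WithTop.coe_lt_top _)
  have hrec : ∀ n ≤ 3, ‖fourierInt (iteratedDeriv n f) ξ‖ = |ξ| ^ n * ‖fourierInt f ξ‖ := by
    intro n
    induction n with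
    | zero => simp
    | succ n ih =>
      intro hn
      rw [iteratedDeriv_succ, fourierInt_deriv (hdiff n)
        (integrable_of_decay (hcont n) (hC n (by omega)))
        (by rw [← iteratedDeriv_succ]; exact integrable_of_decay (hcont _) (hC _ hn)),
        norm_mul, ih (by omega)]
      simp [pow_succ]; ring
  have hb : ∀ n ≤ 3, |ξ| ^ n * ‖fourierInt f ξ‖ ≤ C * Real.pi := fun n hn => by
    rw [← hrec n hn]; exact norm_fourierInt_le (hC n hn) ξ
  rw [← div_eq_mul_inv, le_div_iff₀ (by positivity), ← sq_abs ξ]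
  linarith [hb 0 (by norm_num), hb 1 (by norm_num), hb 2 (by norm_num), hb 3 (by norm_num)]

/-- Fubini: pairing `u` with an inverse Fourier integral moves the transform onto `u`. -/
lemma integral_mul_inverse_fourier {u : ℝ → ℝ} {φ : ℝ → ℂ} (hu : Integrable u)
    (hφ : Integrable φ) :
    ∫ x : ℝ, (u x : ℂ) * ∫ ξ : ℝ, φ ξ * Complex.exp (Complex.I * ξ * x)
      = ∫ ξ : ℝ, φ ξ * fourierInt u (-ξ) := by
  simp only [fourierInt, ← integral_const_mul]
  rw [integral_integral_swap]
  · congr 1; ext ξ; congr 1; ext x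
    rw [show -(Complex.I * ((-ξ : ℝ) : ℂ) * x) = Complex.I * ξ * x by push_cast; ring]
    ring
  · have h1 : Integrable (fun z : ℝ × ℝ => (u z.1 : ℂ) * φ z.2) (volume.prod volume) :=
      hu.ofReal.mul_prod hφ
    have h2 := h1.bdd_mul (c := 1)
      (f := fun z : ℝ × ℝ => Complex.exp (Complex.I * (z.2 : ℂ) * (z.1 : ℂ)))
      (by fun_prop) (ae_of_all _ fun z => by rw [norm_exp_pos])
    refine h2.congr (ae_of_all _ fun z => ?_)
    simp only [Function.uncurry]; ring

lemma differentiable_inverse_fourier {φ : ℝ → ℂ} (hφ : Integrable φ)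
    (hφ' : Integrable fun ξ : ℝ => (ξ : ℂ) * φ ξ) :
    Differentiable ℝ fun x : ℝ => ∫ ξ : ℝ, φ ξ * Complex.exp (Complex.I * ξ * x) := by
  intro x₀
  have hint : ∀ {ψ : ℝ → ℂ}, Integrable ψ → ∀ x : ℝ,
      Integrable fun ξ : ℝ => ψ ξ * Complex.exp (Complex.I * ξ * x) := fun hψ x =>
    hψ.mul_bdd (c := 1) (by fun_prop) (ae_of_all _ fun ξ => by rw [norm_exp_pos])
  refine (hasDerivAt_integral_of_dominated_loc_of_deriv_le (s := Set.univ)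
    (bound := fun ξ : ℝ => ‖(ξ : ℂ) * φ ξ‖)
    (F' := fun x (ξ : ℝ) => (Complex.I * ((ξ : ℂ) * φ ξ)) * Complex.exp (Complex.I * ξ * x))
    univ_mem (Eventually.of_forall fun x => (hint hφ x).aestronglyMeasurable) (hint hφ x₀)
    (hint (hφ'.const_mul _) x₀).aestronglyMeasurable
    (ae_of_all _ fun ξ x _ => ?_) hφ'.norm (ae_of_all _ fun ξ x _ => ?_)).2.differentiableAt
  · rw [norm_mul, norm_exp_pos, norm_mul, Complex.norm_I, one_mul, mul_one]
  · have h1 : HasDerivAt (fun x : ℝ => Complex.I * ξ * x) (Complex.I * ξ * 1) x :=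
      (Complex.ofRealCLM.hasDerivAt (x := x)).const_mul _
    refine (h1.cexp.const_mul (φ ξ)).congr_deriv ?_
    ring

/-- Riemann–Lebesgue in the normalization used here; no integrability of `φ` is needed, as the
integral is `0` otherwise. -/
lemma tendsto_inverse_fourier (φ : ℝ → ℂ) :
    Tendsto (fun x : ℝ => ∫ ξ : ℝ, φ ξ * Complex.exp (Complex.I * ξ * x))
      (cocompact ℝ) (𝓝 0) := by
  have hne : -(2 * Real.pi)⁻¹ ≠ 0 := by simp [Real.pi_ne_zero]
  have h := (Real.tendsto_integral_exp_smul_cocompact φ).comp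
    ((Homeomorph.mulLeft₀ _ hne).isClosedEmbedding.tendsto_cocompact)
  refine h.congr fun x => ?_
  simp only [Function.comp, Homeomorph.coe_mulLeft₀]
  congr 1; ext ξ
  rw [Circle.smul_def, Real.fourierChar_apply, smul_eq_mul, mul_comm]
  congr 2
  simp
  field_simp

/-! ### Differentiation in time -/

/-- Uniformly in time on unit balls, `r t` with its first three derivatives and `rt t` are
`O((1 + x²)⁻¹)`. In the application `rt` is the time derivative of `r`. -/
def LocDecay (r rt : ℝ → ℝ → ℝ) : Prop :=
  ∀ t₀ : ℝ, ∃ C : ℝ, 0 ≤ C ∧ ∀ t ∈ Metric.ball t₀ 1, ∀ x : ℝ,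
    (∀ n ≤ 3, |iteratedDeriv n (r t) x| ≤ C * (1 + x ^ 2)⁻¹) ∧ |rt t x| ≤ C * (1 + x ^ 2)⁻¹

lemma LocDecay.integrable {r rt : ℝ → ℝ → ℝ} (H : LocDecay r rt)
    (hr : ∀ t, Continuous (r t)) (t : ℝ) : Integrable (r t) := by
  obtain ⟨C, -, h⟩ := H t
  refine integrable_of_decay (C := C) (hr t) fun x => ?_
  simpa using (h t (Metric.mem_ball_self one_pos) x).1 0 (by norm_num)

lemma LocDecay.integrable_dt {r rt : ℝ → ℝ → ℝ} (H : LocDecay r rt)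
    (hrt : ∀ t, Continuous (rt t)) (t : ℝ) : Integrable (rt t) := by
  obtain ⟨C, -, h⟩ := H t
  exact integrable_of_decay (C := C) (hrt t) fun x => (h t (Metric.mem_ball_self one_pos) x).2

lemma hasDerivAt_fourierInt {r rt : ℝ → ℝ → ℝ} (H : LocDecay r rt)
    (hr : ∀ t, Continuous (r t)) (hrt : ∀ t, Continuous (rt t))
    (hd : ∀ t x, HasDerivAt (fun s => r s x) (rt t x) t) (ξ t : ℝ) :
    HasDerivAt (fun s => fourierInt (r s) ξ) (fourierInt (rt t) ξ) t := by
  obtain ⟨C, -, h⟩ := H t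
  refine (hasDerivAt_integral_of_dominated_loc_of_deriv_le (s := Metric.ball t 1)
    (bound := fun x => C * (1 + x ^ 2)⁻¹)
    (F' := fun s (x : ℝ) => Complex.exp (-(Complex.I * ξ * x)) * (rt s x : ℂ))
    (Metric.ball_mem_nhds t one_pos)
    (Eventually.of_forall fun s =>
      (integrable_fourier_kernel (H.integrable hr s) ξ).aestronglyMeasurable)
    (integrable_fourier_kernel (H.integrable hr t) ξ)
    (integrable_fourier_kernel (H.integrable_dt hrt t) ξ).aestronglyMeasurable
    (ae_of_all _ fun x s hs => ?_) (integrable_inv_one_add_sq.const_mul C)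
    (ae_of_all _ fun x s _ => ((hd s x).ofReal_comp).const_mul _)).2
  rw [norm_mul, norm_exp_neg, one_mul, Complex.norm_real]
  exact (h s hs x).2

lemma le_of_weighted {a b ξ : ℝ} (ha : 0 ≤ a) (h : a * (1 + |ξ|) ≤ b) : a ≤ b := by
  nlinarith [abs_nonneg ξ, mul_nonneg ha (abs_nonneg ξ)]

/-- The integrability that makes `m(D) r` an absolutely convergent integral, differentiable in `x`. -/
lemma integrable_symbol_mul {r rt : ℝ → ℝ → ℝ} (H : LocDecay r rt)
    (hs : ∀ t, ContDiff ℝ (⊤ : ℕ∞) (r t)) {m : ℝ → ℝ} {M : ℝ} (hm : Measurable m)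
    (hM : ∀ ξ, |m ξ| ≤ M) (t : ℝ) :
    Integrable (fun ξ : ℝ => (m ξ : ℂ) * fourierInt (r t) ξ) ∧
      Integrable (fun ξ : ℝ => (ξ : ℂ) * ((m ξ : ℂ) * fourierInt (r t) ξ)) := by
  obtain ⟨C, hC, h⟩ := H t
  have hW := fourierInt_weighted (hs t)
    fun n hn x => (h t (Metric.mem_ball_self one_pos) x).1 n hn
  have hF : Continuous (fourierInt (r t)) :=
    continuous_fourierInt (H.integrable (fun t => (hs t).continuous) t)
  have hM0 : 0 ≤ M := (abs_nonneg _).trans (hM 0)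
  have hmm : AEStronglyMeasurable (fun ξ : ℝ => (m ξ : ℂ)) :=
    (Complex.measurable_ofReal.comp hm).aestronglyMeasurable
  have hF1 : Integrable (fourierInt (r t)) :=
    (integrable_inv_one_add_sq.const_mul (4 * C * Real.pi)).mono' hF.aestronglyMeasurable
      (ae_of_all _ fun ξ => le_of_weighted (norm_nonneg _) (hW ξ))
  have hF2 : Integrable fun ξ : ℝ => (ξ : ℂ) * fourierInt (r t) ξ := by
    refine (integrable_inv_one_add_sq.const_mul (4 * C * Real.pi)).mono'
      (by fun_prop) (ae_of_all _ fun ξ => ?_)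
    rw [norm_mul, Complex.norm_real, Real.norm_eq_abs]
    nlinarith [hW ξ, norm_nonneg (fourierInt (r t) ξ)]
  have hMb : ∀ᵐ ξ : ℝ, ‖(m ξ : ℂ)‖ ≤ M :=
    ae_of_all _ fun ξ => by rw [Complex.norm_real]; exact hM ξ
  refine ⟨hF1.bdd_mul hmm hMb, (hF2.bdd_mul hmm hMb).congr (ae_of_all _ fun ξ => ?_)⟩
  ring

/-- For an even bounded symbol, `d/dt ∫ r · m(D)r = 2 ∫ ∂ₜr · m(D)r`. -/
lemma hasDerivAt_quadratic {r rt : ℝ → ℝ → ℝ} (H : LocDecay r rt)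
    (hs : ∀ t, ContDiff ℝ (⊤ : ℕ∞) (r t)) (hrt : ∀ t, Continuous (rt t))
    (hd : ∀ t x, HasDerivAt (fun s => r s x) (rt t x) t)
    {m : ℝ → ℝ} {M : ℝ} (hm : Measurable m)
    (hM : ∀ ξ, |m ξ| ≤ M) (heven : ∀ ξ, m (-ξ) = m ξ) (t : ℝ) :
    HasDerivAt (fun s => ∫ x : ℝ, (r s x : ℂ) * fourierMult m (r s) x)
      (2 * ∫ x : ℝ, (rt t x : ℂ) * fourierMult m (r t) x) t := by
  have hr : ∀ t, Continuous (r t) := fun t => (hs t).continuous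
  have hpull : ∀ (u : ℝ → ℝ) (s : ℝ), Integrable u →
      ∫ x : ℝ, (u x : ℂ) * fourierMult m (r s) x = (1 / (2 * Real.pi) : ℂ) *
        ∫ ξ : ℝ, (m ξ : ℂ) * fourierInt (r s) ξ * fourierInt u (-ξ) := by
    intro u s hu
    rw [← integral_mul_inverse_fourier hu (integrable_symbol_mul H hs hm hM s).1,
      ← integral_const_mul]
    congr 1; ext x; simp only [fourierMult]; ring
  simp_rw [fun s => hpull (r s) s (H.integrable hr s), hpull (rt t) t (H.integrable_dt hrt t)]
  obtain ⟨C, hC, h⟩ := H t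
  have hM0 : 0 ≤ M := (abs_nonneg _).trans (hM 0)
  have hF : ∀ s ∈ Metric.ball t 1, ∀ ξ,
      ‖fourierInt (r s) ξ‖ ≤ 4 * C * Real.pi * (1 + ξ ^ 2)⁻¹ := fun s hsb ξ =>
    le_of_weighted (norm_nonneg _) (fourierInt_weighted (hs s) (fun n hn x => (h s hsb x).1 n hn) ξ)
  have hG : ∀ s ∈ Metric.ball t 1, ∀ ξ, ‖fourierInt (rt s) ξ‖ ≤ C * Real.pi := fun s hsb ξ =>
    norm_fourierInt_le (fun x => (h s hsb x).2) ξ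
  have hFc : ∀ s, Continuous (fourierInt (r s)) := fun s =>
    continuous_fourierInt (H.integrable hr s)
  have hGc : Continuous (fourierInt (rt t)) := continuous_fourierInt (H.integrable_dt hrt t)
  have hmm : AEStronglyMeasurable (fun ξ : ℝ => (m ξ : ℂ)) :=
    (Complex.measurable_ofReal.comp hm).aestronglyMeasurable
  have hI := fun s => (integrable_symbol_mul H hs hm hM s).1
  have htb := Metric.mem_ball_self (x := t) one_pos
  have hIG : Integrable fun ξ : ℝ =>
      (m ξ : ℂ) * fourierInt (r t) ξ * fourierInt (rt t) (-ξ) :=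
    (hI t).mul_bdd (by fun_prop) (ae_of_all _ fun ξ => hG t htb (-ξ))
  have key := (hasDerivAt_integral_of_dominated_loc_of_deriv_le (s := Metric.ball t 1)
    (F := fun s (ξ : ℝ) => (m ξ : ℂ) * fourierInt (r s) ξ * fourierInt (r s) (-ξ))
    (F' := fun s (ξ : ℝ) => (m ξ : ℂ) * fourierInt (rt s) ξ * fourierInt (r s) (-ξ)
      + (m ξ : ℂ) * fourierInt (r s) ξ * fourierInt (rt s) (-ξ))
    (bound := fun ξ => (2 * M * (C * Real.pi) * (4 * C * Real.pi)) * (1 + ξ ^ 2)⁻¹)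
    (μ := volume) (Metric.ball_mem_nhds t one_pos)
    (Eventually.of_forall fun s => (hI s).aestronglyMeasurable.mul
      (((hFc s).comp continuous_neg).aestronglyMeasurable))
    ((hI t).mul_bdd (c := 4 * C * Real.pi) (by have := hFc t; fun_prop)
      (ae_of_all _ fun ξ => (hF t htb (-ξ)).trans
        (mul_le_of_le_one_right (by positivity)
          (inv_le_one_of_one_le₀ (by nlinarith [sq_nonneg ξ])))))
    ((((hmm.mul hGc.aestronglyMeasurable).mul
      ((hFc t).comp continuous_neg).aestronglyMeasurable)).add hIG.aestronglyMeasurable)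
    (ae_of_all _ fun ξ s hsb => ?_) (integrable_inv_one_add_sq.const_mul _)
    (ae_of_all _ fun ξ s _ => ?_))
  · have h2 := key.2
    have hIG' : Integrable fun ξ : ℝ =>
        (m ξ : ℂ) * fourierInt (rt t) ξ * fourierInt (r t) (-ξ) := by
      refine hIG.comp_neg.congr (ae_of_all _ fun ξ => ?_)
      simp only [heven, neg_neg]; ring
    -- The substitution `ξ ↦ -ξ` exchanges the two terms of the product rule.
    have hswap : ∫ ξ : ℝ, (m ξ : ℂ) * fourierInt (rt t) ξ * fourierInt (r t) (-ξ)
        = ∫ ξ : ℝ, (m ξ : ℂ) * fourierInt (r t) ξ * fourierInt (rt t) (-ξ) := by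
      rw [← integral_neg_eq_self]
      congr 1; ext ξ
      simp only [heven, neg_neg]; ring
    rw [integral_add hIG' hIG, hswap, ← two_mul] at h2
    refine (h2.const_mul (1 / (2 * Real.pi) : ℂ)).congr_deriv ?_
    ring
  · have hF1 := hF s hsb ξ
    have hF2 := hF s hsb (-ξ)
    rw [neg_sq] at hF2
    have hMξ : ‖(m ξ : ℂ)‖ ≤ M := by rw [Complex.norm_real]; exact hM ξ
    have hG1 := hG s hsb ξ
    have hG2 := hG s hsb (-ξ)
    calc _ ≤ _ := norm_add_le _ _
      _ ≤ M * (C * Real.pi) * (4 * C * Real.pi * (1 + ξ ^ 2)⁻¹)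
          + M * (4 * C * Real.pi * (1 + ξ ^ 2)⁻¹) * (C * Real.pi) := by
        simp only [norm_mul]; gcongr
      _ = _ := by ring
  · have h1 := hasDerivAt_fourierInt H hr hrt hd ξ s
    have h2 := hasDerivAt_fourierInt H hr hrt hd (-ξ) s
    exact (h1.const_mul (m ξ : ℂ)).mul h2

/-- Differentiation of `∫ r³/(2h)` under the integral sign, with the integrability of the integral
and of its derivative's integrand `∂ₜr · r²`. -/
lemma hasDerivAt_cubic {r rt : ℝ → ℝ → ℝ} (H : LocDecay r rt)
    (hr : ∀ t, Continuous (r t)) (hrt : ∀ t, Continuous (rt t))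
    (hd : ∀ t x, HasDerivAt (fun s => r s x) (rt t x) t) (h t : ℝ) :
    Integrable (fun x => r t x ^ 3 / (2 * h)) ∧ Integrable (fun x => rt t x * r t x ^ 2) ∧
    HasDerivAt (fun s => ∫ x : ℝ, r s x ^ 3 / (2 * h))
      (∫ x : ℝ, 3 / (2 * h) * (rt t x * r t x ^ 2)) t := by
  obtain ⟨C, hC, hb⟩ := H t
  have hr1 : ∀ s ∈ Metric.ball t 1, ∀ x, |r s x| ≤ C := fun s hsb x => by
    have := (hb s hsb x).1 0 (by norm_num)
    rw [iteratedDeriv_zero] at this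
    exact this.trans
      (mul_le_of_le_one_right hC (inv_le_one_of_one_le₀ (by nlinarith [sq_nonneg x])))
  have htb := Metric.mem_ball_self (x := t) one_pos
  have hsq : ∀ s ∈ Metric.ball t 1, ∀ x, |r s x ^ 2| ≤ C ^ 2 := fun s hsb x => by
    rw [abs_pow]; gcongr; exact hr1 s hsb x
  have hcube : Integrable (fun x => r t x ^ 3 / (2 * h)) := by
    have := ((H.integrable hr t).mul_bdd (c := C ^ 2) (g := fun x => r t x ^ 2)
      (by have := hr t; fun_prop) (ae_of_all _ fun x => hsq t htb x)).div_const (2 * h)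
    refine this.congr (ae_of_all _ fun x => ?_)
    simp only; ring
  have hmix : Integrable (fun x => rt t x * r t x ^ 2) :=
    (H.integrable_dt hrt t).mul_bdd (c := C ^ 2) (g := fun x => r t x ^ 2)
      (by have := hr t; fun_prop) (ae_of_all _ fun x => hsq t htb x)
  refine ⟨hcube, hmix, ?_⟩
  refine (hasDerivAt_integral_of_dominated_loc_of_deriv_le (s := Metric.ball t 1)
    (F' := fun s x => 3 / (2 * h) * (rt s x * r s x ^ 2))
    (bound := fun x => |3 / (2 * h)| * (C * (1 + x ^ 2)⁻¹ * C ^ 2))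
    (Metric.ball_mem_nhds t one_pos)
    (Eventually.of_forall fun s => by have := hr s; fun_prop) hcube
    (hmix.const_mul _).aestronglyMeasurable (ae_of_all _ fun x s hsb => ?_)
    (((integrable_inv_one_add_sq.const_mul C).mul_const _).const_mul _)
    (ae_of_all _ fun x s _ => ?_)).2
  · rw [Real.norm_eq_abs, abs_mul, abs_mul]
    have := hsq s hsb x
    have := (hb s hsb x).2
    gcongr
  · refine (((hd s x).pow 3).div_const (2 * h)).congr_deriv ?_
    push_cast; ring

/-- A crude bound (the sharp one is `1`): `|tanh y| ≤ 2|y|` for `|y| ≤ 1` from `|eʸ - 1| ≤ 2|y|`,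
and `|tanh y| ≤ 1 ≤ |y|` otherwise. At `y = 0` the division convention gives `0`. -/
lemma Ksym_bound {y : ℝ} : Real.sqrt (Real.tanh y / y) ≤ 2 := by
  rw [show (2 : ℝ) = Real.sqrt (2 ^ 2) by rw [Real.sqrt_sq (by norm_num)]]
  refine Real.sqrt_le_sqrt ((le_abs_self _).trans ?_)
  rw [abs_div]
  refine div_le_of_le_mul₀ (abs_nonneg _) (by norm_num) ?_
  rcases le_total |y| 1 with hy | hy
  · have h1 := Real.abs_exp_sub_one_le hy
    have h2 := Real.abs_exp_sub_one_le (x := -y) (by rwa [abs_neg])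
    rw [abs_neg] at h2
    rw [Real.tanh_eq_sinh_div_cosh, abs_div, abs_of_pos (Real.cosh_pos y)]
    have h3 : |Real.sinh y| ≤ 2 * |y| := by
      rw [Real.sinh_eq]
      rw [abs_le] at *
      constructor <;> linarith
    calc _ ≤ |Real.sinh y| := div_le_self (abs_nonneg _) (Real.one_le_cosh y)
      _ ≤ _ := by linarith [abs_nonneg y]
  · have : |Real.tanh y| ≤ 1 :=
      abs_le.2 ⟨(Real.neg_one_lt_tanh y).le, (Real.tanh_lt_one y).le⟩
    linarith

/-! ### Conservation -/

theorem stmt_16 (g h : ℝ) (hg : 0 < g) (hh : 0 < h)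
    (Ksym : ℝ → ℝ)
    (hKsym : ∀ ξ : ℝ, Ksym ξ =
      if ξ = 0 then 1 else Real.sqrt (Real.tanh (h * ξ) / (h * ξ)))
    (r : ℝ → ℝ → ℝ)
    (hrsmooth : ContDiff ℝ (⊤ : ℕ∞) (fun p : ℝ × ℝ => r p.1 p.2))
    -- (a) the sections are Schwartz
    (ha : ∀ t : ℝ, ∃ f : SchwartzMap ℝ ℝ, ∀ x, f x = r t x)
    -- (b) locally-in-time uniform Schwartz bounds
    (hb : ∀ I : Set ℝ, IsCompact I → ∀ k n : ℕ, ∃ C : ℝ, ∀ t ∈ I, ∀ x : ℝ,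
      (1 + |x|) ^ k *
        (|iteratedDeriv n (r t) x| + |deriv (fun s => iteratedDeriv n (r s) x) t|) ≤ C)
    -- (c) the deterministic Whitham equation
    (hc : ∀ t x : ℝ,
      ((deriv (fun s => r s x) t : ℝ) : ℂ)
        = -(Real.sqrt (g * h) : ℂ) *
            deriv (fun y => fourierMult Ksym (r t) y
              + ((3 / (4 * h) * r t y ^ 2 : ℝ) : ℂ)) x)
    (Q : ℝ → ℂ)
    (hQ : ∀ t : ℝ, Q t = (g : ℂ) * ∫ x : ℝ,
      (r t x : ℂ) * fourierMult Ksym (r t) x + ((r t x ^ 3 / (2 * h) : ℝ) : ℂ)) :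
    ∀ t s : ℝ, Q t = Q s := by
  have hKeven : ∀ ξ, Ksym (-ξ) = Ksym ξ := fun ξ => by
    simp only [hKsym, neg_eq_zero, mul_neg, Real.tanh_neg, neg_div_neg_eq]
  have hKM : ∀ ξ, |Ksym ξ| ≤ 2 := fun ξ => by
    rw [hKsym]
    split_ifs
    · norm_num
    · rw [abs_of_nonneg (Real.sqrt_nonneg _)]; exact Ksym_bound
  have hKm : Measurable Ksym := by
    rw [funext hKsym]
    refine Measurable.ite (measurableSet_singleton 0) measurable_const ?_
    simp only [Real.tanh_eq_sinh_div_cosh]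
    fun_prop
  set rt : ℝ → ℝ → ℝ := fun t x => deriv (fun s => r s x) t with hrt_def
  have hs : ∀ t, ContDiff ℝ (⊤ : ℕ∞) (r t) := fun t =>
    hrsmooth.comp (contDiff_prodMk_right t)
  have hr : ∀ t, Continuous (r t) := fun t => (hs t).continuous
  have hslice : ∀ x, ContDiff ℝ (⊤ : ℕ∞) (fun s => r s x) := fun x =>
    hrsmooth.comp (contDiff_prodMk_left x)
  have hd : ∀ t x, HasDerivAt (fun s => r s x) (rt t x) t := fun t x =>
    ((hslice x).differentiable (by simp)).differentiableAt.hasDerivAt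
  -- Joint smoothness makes `∂ₜr` continuous in `x`: it is a directional derivative on `ℝ × ℝ`.
  have hrt : ∀ t, Continuous (rt t) := fun t => by
    have hfd : ∀ x, rt t x
        = fderiv ℝ (fun p : ℝ × ℝ => r p.1 p.2) (t, x) (1, 0) := fun x => by
      have h1 := ((hrsmooth.differentiable (by simp)) (t, x)).hasFDerivAt
      have h2 : HasDerivAt (fun s : ℝ => (s, x)) ((1 : ℝ), (0 : ℝ)) t :=
        (hasDerivAt_id t).prodMk (hasDerivAt_const t x)
      exact (h1.comp_hasDerivAt t h2).deriv
    rw [funext hfd]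
    have := hrsmooth.continuous_fderiv (by simp)
    fun_prop
  have H : LocDecay r rt := by
    intro t₀
    choose C hC using fun n => hb _ (isCompact_closedBall t₀ 1) 2 n
    have hpos : ∀ n, 0 ≤ C n := fun n =>
      le_trans (by positivity) (hC n t₀ (Metric.mem_closedBall_self zero_le_one) 0)
    have hle : ∀ a b c x : ℝ, 0 ≤ a → 0 ≤ b → (1 + |x|) ^ 2 * (a + b) ≤ c →
        a ≤ c * (1 + x ^ 2)⁻¹ ∧ b ≤ c * (1 + x ^ 2)⁻¹ := by
      intro a b c x ha hb hab
      have : (1 + x ^ 2) * (a + b) ≤ (1 + |x|) ^ 2 * (a + b) := by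
        gcongr
        nlinarith [abs_nonneg x, sq_abs x]
      rw [← div_eq_mul_inv, le_div_iff₀ (by positivity), le_div_iff₀ (by positivity)]
      constructor <;> nlinarith [mul_nonneg ha (sq_nonneg x), mul_nonneg hb (sq_nonneg x)]
    refine ⟨C 0 + C 1 + C 2 + C 3, by linarith [hpos 0, hpos 1, hpos 2, hpos 3],
      fun t ht x => ?_⟩
    have hCn : ∀ n ≤ 3, C n ≤ C 0 + C 1 + C 2 + C 3 := fun n hn => by
      interval_cases n <;> linarith [hpos 0, hpos 1, hpos 2, hpos 3]
    have hall : ∀ n ≤ 3, _ := fun n hn => hle _ _ _ x (abs_nonneg _) (abs_nonneg _)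
      ((hC n t (Metric.ball_subset_closedBall ht) x).trans (hCn n hn))
    refine ⟨fun n hn => (hall n hn).1, ?_⟩
    simpa only [iteratedDeriv_zero] using (hall 0 (by norm_num)).2
  -- `Kr` is differentiable and vanishes at infinity.
  have hAd : ∀ t, Differentiable ℝ (fourierMult Ksym (r t)) := fun t =>
    (differentiable_inverse_fourier (integrable_symbol_mul H hs hKm hKM t).1
      (integrable_symbol_mul H hs hKm hKM t).2).const_mul _
  have hA0 : ∀ t, Tendsto (fourierMult Ksym (r t)) (cocompact ℝ) (𝓝 0) := fun t => by
    rw [← mul_zero (1 / (2 * Real.pi) : ℂ)]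
    exact (tendsto_inverse_fourier _).const_mul _
  have hAb : ∀ t, ∃ B : ℝ, ∀ x, ‖fourierMult Ksym (r t) x‖ ≤ B := fun t => by
    refine ⟨‖(1 / (2 * Real.pi) : ℂ)‖ * ∫ ξ : ℝ, ‖(Ksym ξ : ℂ) * fourierInt (r t) ξ‖, fun x => ?_⟩
    rw [fourierMult, norm_mul]
    gcongr
    refine (norm_integral_le_integral_norm _).trans_eq ?_
    congr 1; ext ξ
    rw [norm_mul, norm_exp_pos, mul_one]
  have hAi : ∀ t (u : ℝ → ℝ), Integrable u →
      Integrable fun x => (u x : ℂ) * fourierMult Ksym (r t) x := fun t u hu => by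
    obtain ⟨B, hB⟩ := hAb t
    exact hu.ofReal.mul_bdd (hAd t).continuous.aestronglyMeasurable (ae_of_all _ hB)
  have hr0 : ∀ t, Tendsto (r t) (cocompact ℝ) (𝓝 0) := fun t => by
    obtain ⟨f, hf⟩ := ha t
    rw [← funext hf]
    exact zero_at_infty f
  have hderiv : ∀ t, HasDerivAt Q 0 t := fun t => by
    obtain ⟨-, hmix, hcub⟩ := hasDerivAt_cubic H hr hrt hd h t
    have hquad := hasDerivAt_quadratic H hs hrt hd hKm hKM hKeven t
    have hQ' : Q = fun s => (g : ℂ) * ((∫ x : ℝ, (r s x : ℂ) * fourierMult Ksym (r s) x)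
        + ((∫ x : ℝ, r s x ^ 3 / (2 * h) : ℝ) : ℂ)) := by
      ext s
      have hi : Integrable fun x => ((r s x ^ 3 / (2 * h) : ℝ) : ℂ) :=
        (hasDerivAt_cubic H hr hrt hd h s).1.ofReal
      rw [hQ, integral_add (hAi s _ (H.integrable hr s)) hi, integral_complex_ofReal]
    rw [hQ']
    refine ((hquad.add hcub.ofReal_comp).const_mul (g : ℂ)).congr_deriv ?_
    set P : ℝ → ℂ := fun y => fourierMult Ksym (r t) y
              + ((3 / (4 * h) * r t y ^ 2 : ℝ) : ℂ) with hP
    have hPd : Differentiable ℝ P := by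
      have h1 : Differentiable ℝ fun y => ((3 / (4 * h) * r t y ^ 2 : ℝ) : ℂ) := fun y =>
        ((((hs t).differentiable (by simp) y).pow 2).const_mul
          (3 / (4 * h))).hasDerivAt.ofReal_comp.differentiableAt
      exact (hAd t).add h1
    have hP0 : Tendsto P (cocompact ℝ) (𝓝 0) := by
      have h1 : Tendsto (fun y => ((3 / (4 * h) * r t y ^ 2 : ℝ) : ℂ)) (cocompact ℝ) (𝓝 0) := by
        have := (Complex.continuous_ofReal.tendsto _).comp
          (((hr0 t).pow 2).const_mul (3 / (4 * h)))
        rwa [zero_pow two_ne_zero, mul_zero, Complex.ofReal_zero] at this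
      rw [← add_zero (0 : ℂ)]
      exact (hA0 t).add h1
    have hsplit : (fun x => (rt t x : ℂ) * P x) = fun x =>
        (rt t x : ℂ) * fourierMult Ksym (r t) x
          + ((3 / (4 * h) * (rt t x * r t x ^ 2) : ℝ) : ℂ) := by
      ext x; simp only [hP]; push_cast; ring
    have hmixC : Integrable fun x => ((3 / (4 * h) * (rt t x * r t x ^ 2) : ℝ) : ℂ) :=
      (hmix.const_mul _).ofReal
    have hPi : Integrable fun x => (rt t x : ℂ) * P x := by
      rw [hsplit]
      exact (hAi t _ (H.integrable_dt hrt t)).add hmixC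
    -- By the equation, `∂ₜr · P = -√(gh) P' P` is an exact derivative.
    have hPP : ∀ x, HasDerivAt (fun x => -(Real.sqrt (g * h) : ℂ) / 2 * P x ^ 2)
        ((rt t x : ℂ) * P x) x := fun x => by
      refine (((hPd x).hasDerivAt.pow 2).const_mul (-(Real.sqrt (g * h) : ℂ) / 2)).congr_deriv ?_
      rw [show (rt t x : ℂ) = -(Real.sqrt (g * h) : ℂ) * deriv P x from hc t x]
      push_cast; ring
    have hlim : Tendsto (fun x => -(Real.sqrt (g * h) : ℂ) / 2 * P x ^ 2)
        (cocompact ℝ) (𝓝 0) := by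
      simpa using (hP0.pow 2).const_mul (-(Real.sqrt (g * h) : ℂ) / 2)
    have hzero : ∫ x : ℝ, (rt t x : ℂ) * P x = 0 := by
      rw [integral_of_hasDerivAt_of_tendsto hPP hPi (hlim.mono_left atBot_le_cocompact)
        (hlim.mono_left atTop_le_cocompact), sub_zero]
    rw [hsplit, integral_add (hAi t _ (H.integrable_dt hrt t)) hmixC,
      integral_complex_ofReal, integral_const_mul] at hzero
    rw [integral_const_mul]
    push_cast at hzero ⊢
    linear_combination (2 * g : ℂ) * hzero
  exact fun t s => is_const_of_deriv_eq_zero (fun t => (hderiv t).differentiableAt)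
    (fun t => (hderiv t).deriv) t s
end
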